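/- arXiv:1609.02867 — 2 statements merged into one kernel-verified Lean document; each statement's English description precedes it below -/
import Mathlib

section
/- Let μ ≤_cd ν be probability measures on ℝ with finite first moments and let f: ℝ² → [0,∞] be Borel with S_{μ,ν}(f) := sup_{P∈S(μ,ν)} ∫ f dP < ∞. Then there exists a Borel set M ⊆ ℝ with the following property: for every optimizer P ∈ S(μ,ν) (i.e. ∫ f dP = S_{μ,ν}(f)), writing μ_M = μ|_M, ν_M for the second marginal of P|_{M×ℝ}, μ_N = μ|_{ℝ∖M} and ν_N for the second marginal of P|_{(ℝ∖M)×ℝ}, one has ∫_{M×ℝ} f dP = sup_{Q ∈ M(μ_M,ν_M)} ∫ f dQ and ∫_{(ℝ∖M)×ℝ} f dP = sup_{Q ∈ Π(μ_N,ν_N)} ∫ f dQ; that is, P|_{M×ℝ} is an optimal martingale transport between its marginals and P|_{(ℝ∖M)×ℝ} is an optimal Monge–Kantorovich transport between its marginals. -/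
/-!
The proof uses no duality; it perturbs optimizers directly.

For a supermartingale coupling `P` of `μ` and `ν`, the defect `∫_{A × ℝ} s - t dP` is a finite
measure in `A`, with a density `s ≥ 0` with respect to `μ` (`exists_slack`), here called the slack.
Countable convex mixtures of optimizers are optimizers and their slacks are mixed accordingly
(`exists_mixture`), so some optimizer `P₀` has a slack `s₀` whose strict set `{s₀ > 0}` is
maximal up to `μ`-null sets (`exists_maximal_slack`); mixing once more, it contains the strict set
of every optimizer up to a null set.
The set in the theorem is `M = {s₀ = 0}`.

On `M` every optimizer `P` has vanishing slack, so `P|_{M × ℝ}` is a martingale coupling of its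
marginals; replacing it by another martingale coupling of these marginals stays within the
supermartingale couplings of `μ` and `ν`, hence it is optimal.

Off `M` the key point is `optimal_of_slack_pos`: where an optimizer has positive slack, it is
Monge–Kantorovich optimal. Suppose a coupling `Q` of the marginals of the restriction `T` of the
optimizer does better. Gluing copies of `T` and `Q` alternately gives a law of paths
`(x₀, y₀), …, (xₙ, yₙ)` with `(xᵢ, yᵢ) ∼ T` and `(xᵢ, yᵢ₊₁) ∼ Q` (`exists_chain`). Exchanging the
pairs `(xᵢ, yᵢ)` for `(xᵢ, yᵢ₊₁)` and `(xₙ, y₀)` preserves both marginals, even after restricting to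
any set of paths. As `f ≥ 0`, the closing pair costs nothing, so the gain is positive for large `n`.
On paths with slack bounded below and `yᵢ` bounded, a small multiple of the exchange keeps the
supermartingale property, contradicting optimality (`lintegral_le_of_perturbation`).
For an arbitrary optimizer `P` this is applied to the mixture `(P + P₀) / 2`, whose slack is positive
off `M`: a coupling beating `P|_{Mᶜ × ℝ}` would give one beating the mixture.
-/

open MeasureTheory Set
open scoped ENNReal

noncomputable section

/-- A finite Borel measure on ℝ with finite first moment. -/
def FiniteFirstMoment (μ : Measure ℝ) : Prop :=
  IsFiniteMeasure μ ∧ Integrable (fun x : ℝ => x) μ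

/-- Linear growth of a real function. -/
def LinearGrowth (φ : ℝ → ℝ) : Prop :=
  ∃ C : ℝ, ∀ x : ℝ, |φ x| ≤ C * (1 + |x|)

/-- Convex-decreasing (second stochastic) order `μ ≤_cd ν`. -/
def CDOrder (μ ν : Measure ℝ) : Prop :=
  ∀ φ : ℝ → ℝ, ConvexOn ℝ Set.univ φ → Antitone φ → LinearGrowth φ →
    ∫ x, φ x ∂μ ≤ ∫ x, φ x ∂ν

/-- Positive-convex-decreasing order `μ ≤_pcd ν`. -/
def PCDOrder (μ ν : Measure ℝ) : Prop :=
  ∀ φ : ℝ → ℝ, ConvexOn ℝ Set.univ φ → Antitone φ → (∀ x : ℝ, 0 ≤ φ x) →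
    LinearGrowth φ → ∫ x, φ x ∂μ ≤ ∫ x, φ x ∂ν

/-- Convex order `μ ≤_c ν`. -/
def COrder (μ ν : Measure ℝ) : Prop :=
  ∀ φ : ℝ → ℝ, ConvexOn ℝ Set.univ φ → LinearGrowth φ →
    ∫ x, φ x ∂μ ≤ ∫ x, φ x ∂ν

/-- `P` is a coupling of `μ` and `ν`. -/
def IsCoupling (P : Measure (ℝ × ℝ)) (μ ν : Measure ℝ) : Prop :=
  P.map Prod.fst = μ ∧ P.map Prod.snd = ν

/-- The supermartingale property of a measure on `ℝ × ℝ`. -/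
def SupermartingaleProperty (P : Measure (ℝ × ℝ)) : Prop :=
  ∀ A : Set ℝ, MeasurableSet A →
    ∫ p in A ×ˢ (Set.univ : Set ℝ), p.2 ∂P ≤ ∫ p in A ×ˢ (Set.univ : Set ℝ), p.1 ∂P

/-- `P ∈ S(μ,ν)`: supermartingale coupling. -/
def IsSupermartingaleCoupling (P : Measure (ℝ × ℝ)) (μ ν : Measure ℝ) : Prop :=
  IsCoupling P μ ν ∧ SupermartingaleProperty P

/-- `P|_{M×ℝ}` is a martingale. -/
def MartingaleOn (P : Measure (ℝ × ℝ)) (M : Set ℝ) : Prop :=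
  ∀ A : Set ℝ, MeasurableSet A → A ⊆ M →
    ∫ p in A ×ˢ (Set.univ : Set ℝ), p.2 ∂P = ∫ p in A ×ˢ (Set.univ : Set ℝ), p.1 ∂P

/-- `P ∈ M(μ,ν)`: martingale coupling. -/
def IsMartingaleCoupling (P : Measure (ℝ × ℝ)) (μ ν : Measure ℝ) : Prop :=
  IsCoupling P μ ν ∧ MartingaleOn P Set.univ

/-- `θ` is the shadow `S^ν(μ)` of `μ` in `ν`. -/
def IsShadow (μ ν θ : Measure ℝ) : Prop :=
  FiniteFirstMoment θ ∧ CDOrder μ θ ∧ θ ≤ ν ∧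
  ∀ θ' : Measure ℝ, FiniteFirstMoment θ' → CDOrder μ θ' → θ' ≤ ν → CDOrder θ θ'

/-- `P` is the Increasing Supermartingale Transport from `μ` to `ν`. -/
def IsIncreasingSMT (μ ν : Measure ℝ) (P : Measure (ℝ × ℝ)) : Prop :=
  IsSupermartingaleCoupling P μ ν ∧
  ∀ x : ℝ, ∃ θ : Measure ℝ, IsShadow (μ.restrict (Set.Iic x)) ν θ ∧
    ∀ A : Set ℝ, MeasurableSet A → P (Set.Iic x ×ˢ A) = θ A

/-- `P` is the Decreasing Supermartingale Transport from `μ` to `ν`. -/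
def IsDecreasingSMT (μ ν : Measure ℝ) (P : Measure (ℝ × ℝ)) : Prop :=
  IsSupermartingaleCoupling P μ ν ∧
  ∀ x : ℝ, ∃ θ : Measure ℝ, IsShadow (μ.restrict (Set.Ici x)) ν θ ∧
    ∀ A : Set ℝ, MeasurableSet A → P (Set.Ici x ×ˢ A) = θ A

/-- Relaxed supermartingale Spence–Mirrlees property. -/
def RelaxedSupermartingaleSM (f : ℝ × ℝ → ℝ) : Prop :=
  ∀ x₁ x₂ : ℝ, x₁ < x₂ →
    Antitone (fun y : ℝ => f (x₂, y) - f (x₁, y)) ∧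
    ConvexOn ℝ Set.univ (fun y : ℝ => f (x₂, y) - f (x₁, y))

/-- (Strict) supermartingale Spence–Mirrlees property. -/
def SupermartingaleSM (f : ℝ × ℝ → ℝ) : Prop :=
  ∀ x₁ x₂ : ℝ, x₁ < x₂ →
    StrictAnti (fun y : ℝ => f (x₂, y) - f (x₁, y)) ∧
    StrictConvexOn ℝ Set.univ (fun y : ℝ => f (x₂, y) - f (x₁, y))

/-- `f⁺` is `S(μ,ν)`-uniformly integrable. -/
def PosPartUnifInt (μ ν : Measure ℝ) (f : ℝ × ℝ → ℝ) : Prop :=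
  ∀ ε : ℝ, 0 < ε → ∃ N : ℝ, ∀ P : Measure (ℝ × ℝ),
    IsSupermartingaleCoupling P μ ν →
      ∫ p in {p : ℝ × ℝ | N < max (f p) 0}, max (f p) 0 ∂P ≤ ε

/-- First-order left monotonicity of `(Γ, M)`. -/
def FirstOrderLeftMonotone (Γ : Set (ℝ × ℝ)) (M : Set ℝ) : Prop :=
  ∀ x₁ y₁ x₂ y₂ : ℝ, (x₁, y₁) ∈ Γ → (x₂, y₂) ∈ Γ → x₁ < x₂ → x₂ ∉ M → y₁ ≤ y₂

/-- First-order right monotonicity of `(Γ, M)`. -/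
def FirstOrderRightMonotone (Γ : Set (ℝ × ℝ)) (M : Set ℝ) : Prop :=
  ∀ x₁ y₁ x₂ y₂ : ℝ, (x₁, y₁) ∈ Γ → (x₂, y₂) ∈ Γ → x₁ < x₂ → x₁ ∉ M → y₂ ≤ y₁

/-- Second-order left monotonicity of `Γ`. -/
def SecondOrderLeftMonotone (Γ : Set (ℝ × ℝ)) : Prop :=
  ∀ x y₁ y₂ x' y' : ℝ, (x, y₁) ∈ Γ → (x, y₂) ∈ Γ → (x', y') ∈ Γ →
    y₁ < y₂ → x < x' → y' ∉ Set.Ioo y₁ y₂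

/-- Second-order right monotonicity of `Γ`. -/
def SecondOrderRightMonotone (Γ : Set (ℝ × ℝ)) : Prop :=
  ∀ x y₁ y₂ x' y' : ℝ, (x, y₁) ∈ Γ → (x, y₂) ∈ Γ → (x', y') ∈ Γ →
    y₁ < y₂ → x' < x → y' ∉ Set.Ioo y₁ y₂

/-- Nondegeneracy of `(Γ, M)`. -/
def Nondegenerate (Γ : Set (ℝ × ℝ)) (M : Set ℝ) : Prop :=
  (∀ x y : ℝ, (x, y) ∈ Γ → x < y → ∃ y' : ℝ, y' < x ∧ (x, y') ∈ Γ) ∧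
  (∀ x y : ℝ, x ∈ M → (x, y) ∈ Γ → y < x → ∃ y' : ℝ, x < y' ∧ (x, y') ∈ Γ)

/-- The put function `p_μ`. -/
def put (μ : Measure ℝ) (t : ℝ) : ℝ := ∫ s, max (t - s) 0 ∂μ

/-- `x` is a barrier for the supermartingale transports from `μ` to `ν`. -/
def IsBarrier (μ ν : Measure ℝ) (x : ℝ) : Prop :=
  ∀ P : Measure (ℝ × ℝ), IsSupermartingaleCoupling P μ ν →
    P {p : ℝ × ℝ | p.1 ≤ x ∧ x < p.2} = 0 ∧ P {p : ℝ × ℝ | x ≤ p.1 ∧ p.2 < x} = 0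

/-- Barycenter of a finite measure (with `bary 0 = 0`). -/
def bary (θ : Measure ℝ) : ℝ := (∫ t, t ∂θ) / (θ Set.univ).toReal

/-! ### Couplings and the supermartingale defect -/

lemma IsCoupling.isFiniteMeasure {P : Measure (ℝ × ℝ)} {μ ν : Measure ℝ} [IsFiniteMeasure μ]
    (hP : IsCoupling P μ ν) : IsFiniteMeasure P := by
  have h := hP.1
  have : IsFiniteMeasure (P.map Prod.fst) := by rw [h]; infer_instance
  exact Measure.isFiniteMeasure_of_map measurable_fst.aemeasurable

lemma IsCoupling.integrable_fst {P : Measure (ℝ × ℝ)} {μ ν : Measure ℝ}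
    (hP : IsCoupling P μ ν) (hμ : Integrable (fun x : ℝ => x) μ) :
    Integrable (fun p : ℝ × ℝ => p.1) P := by
  rw [← hP.1] at hμ
  exact hμ.comp_measurable measurable_fst

lemma IsCoupling.integrable_snd {P : Measure (ℝ × ℝ)} {μ ν : Measure ℝ}
    (hP : IsCoupling P μ ν) (hν : Integrable (fun x : ℝ => x) ν) :
    Integrable (fun p : ℝ × ℝ => p.2) P := by
  rw [← hP.2] at hν
  exact hν.comp_measurable measurable_snd

/-- The supermartingale defect `∫_{A×ℝ} (s - t) dP(s,t)` of `P` over `A`. It is nonnegative for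
all `A` iff `P` is a supermartingale, and vanishes for all `A ⊆ M` iff `P|_{M×ℝ}` is a
martingale. -/
def defect (P : Measure (ℝ × ℝ)) (A : Set ℝ) : ℝ :=
  ∫ p in A ×ˢ (Set.univ : Set ℝ), (p.1 - p.2) ∂P

lemma IsCoupling.defect_eq {P : Measure (ℝ × ℝ)} {μ ν : Measure ℝ} (hP : IsCoupling P μ ν)
    (hμ : Integrable (fun x : ℝ => x) μ) (hν : Integrable (fun x : ℝ => x) ν) (A : Set ℝ) :
    defect P A = ∫ p in A ×ˢ (Set.univ : Set ℝ), p.1 ∂P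
      - ∫ p in A ×ˢ (Set.univ : Set ℝ), p.2 ∂P :=
  integral_sub (hP.integrable_fst hμ).integrableOn (hP.integrable_snd hν).integrableOn

lemma IsCoupling.supermartingale_iff {P : Measure (ℝ × ℝ)} {μ ν : Measure ℝ}
    (hP : IsCoupling P μ ν)
    (hμ : Integrable (fun x : ℝ => x) μ) (hν : Integrable (fun x : ℝ => x) ν) :
    SupermartingaleProperty P ↔ ∀ A, MeasurableSet A → 0 ≤ defect P A := by
  unfold SupermartingaleProperty
  simp only [hP.defect_eq hμ hν, sub_nonneg]

/-- The defect of a supermartingale coupling has a nonnegative density `s` with respect to the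
first marginal; `s x` is `x` minus the barycenter of the conditional law of the second
coordinate given `x`. -/
lemma exists_slack {P : Measure (ℝ × ℝ)} {μ ν : Measure ℝ} [IsFiniteMeasure μ]
    (hμ : Integrable (fun x : ℝ => x) μ) (hν : Integrable (fun x : ℝ => x) ν)
    (hP : IsSupermartingaleCoupling P μ ν) :
    ∃ s : ℝ → ℝ, Measurable s ∧ (∀ x, 0 ≤ s x) ∧ Integrable s μ ∧
      ∀ A, MeasurableSet A → defect P A = ∫ x in A, s x ∂μ := by
  have := hP.1.isFiniteMeasure
  have hdiff : Integrable (fun p : ℝ × ℝ => p.1 - p.2) P :=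
    (hP.1.integrable_fst hμ).sub (hP.1.integrable_snd hν)
  have hfst : P.fst = μ := hP.1.1
  have hs0 := hdiff.integral_condKernel
  rw [hfst] at hs0
  set s0 : ℝ → ℝ := fun x => ∫ y, (x - y) ∂P.condKernel x with hs0def
  have hA : ∀ A, MeasurableSet A → defect P A = ∫ x in A, s0 x ∂μ := by
    intro A hA
    have := Measure.setIntegral_condKernel_univ_right (ρ := P) hA
      (f := fun p : ℝ × ℝ => p.1 - p.2) hdiff.integrableOn
    rw [hfst] at this
    exact this.symm
  have hnn : 0 ≤ᵐ[μ] s0 := by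
    refine ae_nonneg_of_forall_setIntegral_nonneg hs0 fun A hmA _ => ?_
    rw [← hA A hmA]
    exact (hP.1.supermartingale_iff hμ hν).1 hP.2 A hmA
  set s1 := hs0.1.mk s0 with hs1def
  have hs1m : Measurable s1 := hs0.1.stronglyMeasurable_mk.measurable
  have hae : (fun x => max (s1 x) 0) =ᵐ[μ] s0 := by
    filter_upwards [hnn, hs0.1.ae_eq_mk] with x hx hx1
    change 0 ≤ s0 x at hx
    rw [hs1def, ← hx1, max_eq_left hx]
  refine ⟨fun x => max (s1 x) 0, hs1m.max measurable_const, fun x => le_max_right _ _,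
    hs0.congr hae.symm, fun A hmA => ?_⟩
  rw [hA A hmA]
  exact integral_congr_ae (ae_restrict_of_ae hae.symm)

/-! ### Countable mixtures of optimizers -/

/-- The mixture `∑ₖ 2^{-(k+1)} Pₖ` of optimizers is an optimizer that dominates, up to a constant,
each `Pₖ` both as a measure and in terms of its defect. -/
lemma exists_mixture {μ ν : Measure ℝ} [IsFiniteMeasure μ]
    (hμ : Integrable (fun x : ℝ => x) μ) (hν : Integrable (fun x : ℝ => x) ν)
    (f : ℝ × ℝ → ℝ≥0∞) (V : ℝ≥0∞) (P : ℕ → Measure (ℝ × ℝ))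
    (hP : ∀ k, IsSupermartingaleCoupling (P k) μ ν) (hV : ∀ k, ∫⁻ p, f p ∂(P k) = V) :
    ∃ W, IsSupermartingaleCoupling W μ ν ∧ ∫⁻ p, f p ∂W = V ∧
      ∀ k, ((2 : ℝ≥0∞)⁻¹ ^ (k + 1)) • P k ≤ W ∧
        ∀ A, MeasurableSet A → (2 : ℝ)⁻¹ ^ (k + 1) * defect (P k) A ≤ defect W A := by
  have hsum : ∑' k : ℕ, (2 : ℝ≥0∞)⁻¹ ^ (k + 1) = 1 := by
    rw [ENNReal.tsum_geometric_add_one, ENNReal.one_sub_inv_two, inv_inv,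
      ENNReal.inv_mul_cancel] <;> simp
  set W : Measure (ℝ × ℝ) := Measure.sum fun k => ((2 : ℝ≥0∞)⁻¹ ^ (k + 1)) • P k with hW
  have hconst : ∀ κ : Measure ℝ, (Measure.sum fun k : ℕ => ((2 : ℝ≥0∞)⁻¹ ^ (k + 1)) • κ) = κ := by
    intro κ
    ext s hs
    rw [Measure.sum_apply _ hs]
    simp only [Measure.smul_apply, smul_eq_mul]
    rw [ENNReal.tsum_mul_right, hsum, one_mul]
  have hcW : IsCoupling W μ ν := by
    constructor
    · rw [hW, Measure.map_sum measurable_fst.aemeasurable]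
      simp only [Measure.map_smul, (hP _).1.1]
      exact hconst μ
    · rw [hW, Measure.map_sum measurable_snd.aemeasurable]
      simp only [Measure.map_smul, (hP _).1.2]
      exact hconst ν
  have hdiff : Integrable (fun p : ℝ × ℝ => p.1 - p.2) W :=
    (hcW.integrable_fst hμ).sub (hcW.integrable_snd hν)
  have hdef : ∀ A, MeasurableSet A →
      HasSum (fun k : ℕ => (2 : ℝ)⁻¹ ^ (k + 1) * defect (P k) A) (defect W A) := by
    intro A hA
    have hAm : MeasurableSet (A ×ˢ (Set.univ : Set ℝ)) := hA.prod MeasurableSet.univ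
    have h1 : W.restrict (A ×ˢ (Set.univ : Set ℝ)) =
        Measure.sum fun k => (((2 : ℝ≥0∞)⁻¹ ^ (k + 1)) • P k).restrict (A ×ˢ Set.univ) := by
      rw [hW, Measure.restrict_sum _ hAm]
    have h2 := hdiff.restrict (s := A ×ˢ (Set.univ : Set ℝ))
    rw [h1] at h2
    have h3 := hasSum_integral_measure h2
    rw [← h1] at h3
    have h4 : ∀ k, ∫ p in A ×ˢ (Set.univ : Set ℝ), (p.1 - p.2) ∂(((2 : ℝ≥0∞)⁻¹ ^ (k + 1)) • P k)
        = (2 : ℝ)⁻¹ ^ (k + 1) * defect (P k) A := fun k => by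
      rw [Measure.restrict_smul, integral_smul_measure]
      simp [defect]
    simp only [h4] at h3
    exact h3
  have hnn : ∀ k A, MeasurableSet A → 0 ≤ (2 : ℝ)⁻¹ ^ (k + 1) * defect (P k) A := by
    intro k A hA
    have := ((hP k).1.supermartingale_iff hμ hν).1 (hP k).2 A hA
    positivity
  refine ⟨W, ⟨hcW, (hcW.supermartingale_iff hμ hν).2 fun A hA =>
    (hdef A hA).nonneg fun k => hnn k A hA⟩, ?_, fun k => ⟨?_, fun A hA => ?_⟩⟩
  · rw [hW, lintegral_sum_measure]
    simp only [lintegral_smul_measure, hV, smul_eq_mul]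
    rw [ENNReal.tsum_mul_right, hsum, one_mul]
  · exact Measure.le_sum (fun k => ((2 : ℝ≥0∞)⁻¹ ^ (k + 1)) • P k) k
  · exact le_hasSum (hdef A hA) k fun j _ => hnn j A hA

/-! ### Perturbing a supermartingale coupling -/

/-- Replacing a part `D ≤ P` of a supermartingale coupling by a measure `U` with the same marginals
gives a supermartingale coupling as long as the increase of the second-coordinate integrals is
absorbed by the slack `s` of `P`. Hence such an exchange cannot improve an optimizer. -/
lemma lintegral_le_of_perturbation {μ ν : Measure ℝ} [IsFiniteMeasure μ]
    (hμ : Integrable (fun x : ℝ => x) μ) (hν : Integrable (fun x : ℝ => x) ν)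
    {f : ℝ × ℝ → ℝ≥0∞} {P D U : Measure (ℝ × ℝ)}
    (hP : IsSupermartingaleCoupling P μ ν) (hfin : ∫⁻ p, f p ∂P ≠ ⊤)
    (hopt : ∀ P', IsSupermartingaleCoupling P' μ ν → ∫⁻ p, f p ∂P' ≤ ∫⁻ p, f p ∂P)
    {s : ℝ → ℝ} (hs : ∀ A, MeasurableSet A → defect P A = ∫ x in A, s x ∂μ)
    (hDP : D ≤ P) (h1 : U.map Prod.fst = D.map Prod.fst) (h2 : U.map Prod.snd = D.map Prod.snd)
    (hUD : ∀ A, MeasurableSet A → ∫ p in A ×ˢ (Set.univ : Set ℝ), p.2 ∂U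
      ≤ ∫ p in A ×ˢ (Set.univ : Set ℝ), p.2 ∂D + ∫ x in A, s x ∂μ) :
    ∫⁻ p, f p ∂U ≤ ∫⁻ p, f p ∂D := by
  have := hP.1.isFiniteMeasure
  have hDfin : IsFiniteMeasure D := isFiniteMeasure_of_le P hDP
  have hPD : P - D + D = P := Measure.sub_add_cancel_of_le hDP
  set P0 := P - D with hP0
  have hmap : ∀ {g : ℝ × ℝ → ℝ}, Measurable g → U.map g = D.map g →
      (P0 + U).map g = P.map g := by
    intro g hg h
    rw [Measure.map_add _ _ hg, h, ← Measure.map_add _ _ hg, hPD]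
  have hc : IsCoupling (P0 + U) μ ν :=
    ⟨(hmap measurable_fst h1).trans hP.1.1, (hmap measurable_snd h2).trans hP.1.2⟩
  have hi2 := hP.1.integrable_snd hν
  have hi2' := hc.integrable_snd hν
  have hS : SupermartingaleProperty (P0 + U) := by
    intro A hA
    have hAm : MeasurableSet (A ×ˢ (Set.univ : Set ℝ)) := hA.prod MeasurableSet.univ
    have e1 : ∫ p in A ×ˢ (Set.univ : Set ℝ), p.1 ∂(P0 + U)
        = ∫ p in A ×ˢ (Set.univ : Set ℝ), p.1 ∂P := by
      have key : ∀ W : Measure (ℝ × ℝ), W.map Prod.fst = μ →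
          ∫ p in A ×ˢ (Set.univ : Set ℝ), p.1 ∂W = ∫ x in A, x ∂μ := by
        intro W hW
        rw [← hW, setIntegral_map hA (f := fun x : ℝ => x) aestronglyMeasurable_id measurable_fst.aemeasurable]
        congr 2
        ext p; simp
      rw [key _ hc.1, key _ hP.1.1]
    have e2 : ∫ p in A ×ˢ (Set.univ : Set ℝ), p.2 ∂(P0 + U)
        = ∫ p in A ×ˢ (Set.univ : Set ℝ), p.2 ∂P0 + ∫ p in A ×ˢ (Set.univ : Set ℝ), p.2 ∂U := by
      rw [Measure.restrict_add, integral_add_measure]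
      · exact (hi2'.mono_measure (Measure.le_add_right le_rfl)).integrableOn
      · exact (hi2'.mono_measure (Measure.le_add_left le_rfl)).integrableOn
    have e3 : ∫ p in A ×ˢ (Set.univ : Set ℝ), p.2 ∂P
        = ∫ p in A ×ˢ (Set.univ : Set ℝ), p.2 ∂P0 + ∫ p in A ×ˢ (Set.univ : Set ℝ), p.2 ∂D := by
      conv_lhs => rw [← hPD]
      rw [Measure.restrict_add, integral_add_measure]
      · exact (hi2'.mono_measure (Measure.le_add_right le_rfl)).integrableOn
      · exact (hi2.mono_measure hDP).integrableOn
    have e4 := hP.1.defect_eq hμ hν A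
    have e5 := hUD A hA
    rw [hs A hA] at e4
    rw [e1, e2]
    linarith
  have h3 := hopt _ ⟨hc, hS⟩
  rw [← hPD] at h3 hfin
  rw [lintegral_add_measure] at h3 hfin
  rw [lintegral_add_measure] at h3
  exact (ENNReal.add_le_add_iff_left (fun h => hfin (by rw [h, top_add]))).1 h3

/-! ### Alternating chains of two couplings -/

/-- Gluing: a random variable `g` on `(Ω, κ)` whose law is the first marginal of `Q` can be
completed by a second coordinate so that the joint law is `Q`. -/
lemma exists_glue {Ω : Type*} [MeasurableSpace Ω] (κ : Measure Ω) [IsFiniteMeasure κ]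
    {g : Ω → ℝ} (hg : Measurable g) (Q : Measure (ℝ × ℝ)) [IsFiniteMeasure Q]
    (h : κ.map g = Q.map Prod.fst) :
    ∃ κ' : Measure (Ω × ℝ), IsFiniteMeasure κ' ∧ κ'.map Prod.fst = κ ∧
      κ'.map (fun z => (g z.1, z.2)) = Q := by
  set K : ProbabilityTheory.Kernel Ω ℝ := Q.condKernel.comap g hg with hK
  refine ⟨κ.compProd K, inferInstance, Measure.fst_compProd κ K, ?_⟩
  have hm : Measurable (fun z : Ω × ℝ => (g z.1, z.2)) := by fun_prop
  ext t ht
  conv_rhs => rw [← Q.disintegrate Q.condKernel]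
  rw [Measure.map_apply hm ht, Measure.compProd_apply (hm ht), Measure.compProd_apply ht,
    Measure.fst, ← h, lintegral_map (ProbabilityTheory.Kernel.measurable_kernel_prodMk_left ht) hg]
  rfl

/-- For couplings `R`, `Q` with common marginals there is a path measure
`(xᵢ, yᵢ)_{i ≤ n}` with `(xᵢ, yᵢ) ~ R` and `(xᵢ, yᵢ₊₁) ~ Q`. Paths are indexed by all of `ℕ`; the
coordinates beyond `n` are irrelevant. -/
lemma exists_chain (R Q : Measure (ℝ × ℝ)) [IsFiniteMeasure R] [IsFiniteMeasure Q]
    (h1 : Q.map Prod.fst = R.map Prod.fst) (h2 : Q.map Prod.snd = R.map Prod.snd) (n : ℕ) :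
    ∃ κ : Measure (ℕ → ℝ × ℝ), IsFiniteMeasure κ ∧
      (∀ i ≤ n, κ.map (fun ω => ω i) = R) ∧
      (∀ i < n, κ.map (fun ω => ((ω i).1, (ω (i + 1)).2)) = Q) := by
  induction n with
  | zero =>
    refine ⟨R.map (fun p _ => p), inferInstance, fun i _ => ?_, fun i hi => absurd hi (by simp)⟩
    rw [Measure.map_map (measurable_pi_apply i) (by fun_prop)]
    exact Measure.map_id
  | succ n ih =>
    obtain ⟨κ, hκ, hR, hQ⟩ := ih
    -- Draw `y_{n+1}` given `x_n` from `Q`, then `x_{n+1}` given `y_{n+1}` from `R`.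
    obtain ⟨κ₁, hκ₁, hfst₁, hsnd₁⟩ := exists_glue κ (g := fun ω => (ω n).1) (by fun_prop) Q (by
      rw [h1, ← hR n le_rfl, Measure.map_map measurable_fst (measurable_pi_apply n)]
      rfl)
    obtain ⟨κ₂, hκ₂, hfst₂, hsnd₂⟩ := exists_glue κ₁ (g := Prod.snd) measurable_snd
      (R.map Prod.swap) (by
        rw [Measure.map_map measurable_fst measurable_swap]
        change _ = R.map Prod.snd
        rw [← h2, ← hsnd₁, Measure.map_map measurable_snd (by fun_prop)]
        rfl)
    set F : ((ℕ → ℝ × ℝ) × ℝ) × ℝ → ℕ → ℝ × ℝ :=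
      fun z => Function.update z.1.1 (n + 1) (z.2, z.1.2) with hF
    have hFm : Measurable F := by
      refine measurable_pi_lambda _ fun i => ?_
      by_cases hi : i = n + 1
      · subst hi
        simp only [hF, Function.update_self]
        fun_prop
      · simp only [hF, Function.update_of_ne hi]
        fun_prop
    have hold : ∀ {β : Type} [MeasurableSpace β] (G : (ℕ → ℝ × ℝ) → β), Measurable G →
        κ₂.map (fun z => G z.1.1) = κ.map G := by
      intro β _ G hG
      rw [← hfst₁, ← hfst₂, Measure.map_map measurable_fst measurable_fst,
        Measure.map_map hG (by fun_prop)]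
      rfl
    refine ⟨κ₂.map F, inferInstance, fun i hi => ?_, fun i hi => ?_⟩
    · rw [Measure.map_map (measurable_pi_apply i) hFm]
      rcases Nat.lt_or_ge n i with h | h
      · obtain rfl : i = n + 1 := by omega
        have : R = (κ₂.map (fun z => (z.1.2, z.2))).map Prod.swap := by
          rw [hsnd₂, Measure.map_map measurable_swap measurable_swap, Prod.swap_swap_eq,
            Measure.map_id]
        rw [this, Measure.map_map measurable_swap (by fun_prop)]
        congr 1
        ext z <;> simp [hF]
      · rw [← hR i h, ← hold _ (measurable_pi_apply i)]
        congr 1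
        ext z <;> simp [hF, Function.update_of_ne (show i ≠ n + 1 by omega)]
    · rw [Measure.map_map (by fun_prop) hFm]
      rcases Nat.lt_or_ge i n with h | h
      · rw [← hQ i h, ← hold _ (by fun_prop)]
        congr 1
        ext z <;> simp [hF, Function.update_of_ne (show i ≠ n + 1 by omega),
          Function.update_of_ne (show i + 1 ≠ n + 1 by omega)]
      · obtain rfl : i = n := by omega
        rw [← hsnd₁, ← hfst₂, Measure.map_map (by fun_prop) measurable_fst]
        congr 1
        ext z <;> simp [hF]

/-! ### Monge–Kantorovich optimality where the slack is positive -/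

lemma exists_nat_mul_lt {a b : ℝ≥0∞} (ha : a ≠ ⊤) (hab : a < b) :
    ∃ n : ℕ, ((n : ℝ≥0∞) + 1) * a < n * b := by
  rcases eq_or_ne b ⊤ with rfl | hb
  · refine ⟨1, ?_⟩
    simp only [Nat.cast_one, one_mul]
    exact ENNReal.mul_lt_top (by simp) ha.lt_top
  · lift a to NNReal using ha
    lift b to NNReal using hb
    have hab' : (a : ℝ) < b := by exact_mod_cast hab
    obtain ⟨n, hn⟩ := exists_nat_gt ((a : ℝ) / (b - a))
    refine ⟨n, ?_⟩
    rw [div_lt_iff₀ (by linarith)] at hn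
    have : ((n : ℝ) + 1) * a < n * b := by linarith
    exact_mod_cast this

/-- Where an optimizer `P` is a strict supermartingale, it is an optimal Monge–Kantorovich
transport. Given a better coupling `Q`, take the alternating path measure of length `n`, exchange
the pairs `(xᵢ, yᵢ)` for `(xᵢ, yᵢ₊₁)` and close the cycle with `(xₙ, y₀)`. Since `f ≥ 0` the closing
pair costs nothing, so for large `n` the exchange is a gain; restricted to paths along which
the slack is bounded below and the `yᵢ` are bounded, and scaled down, it preserves the
supermartingale property. -/
lemma optimal_of_slack_pos {μ ν : Measure ℝ} [IsFiniteMeasure μ]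
    (hμ : Integrable (fun x : ℝ => x) μ) (hν : Integrable (fun x : ℝ => x) ν)
    {f : ℝ × ℝ → ℝ≥0∞} (hf : Measurable f) {P : Measure (ℝ × ℝ)}
    (hP : IsSupermartingaleCoupling P μ ν) (hfin : ∫⁻ p, f p ∂P ≠ ⊤)
    (hopt : ∀ P', IsSupermartingaleCoupling P' μ ν → ∫⁻ p, f p ∂P' ≤ ∫⁻ p, f p ∂P)
    {s : ℝ → ℝ} (hsm : Measurable s) (hs0 : ∀ x, 0 ≤ s x) (hsi : Integrable s μ)
    (hs : ∀ A, MeasurableSet A → defect P A = ∫ x in A, s x ∂μ)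
    {N : Set ℝ} (hN : MeasurableSet N) (hpos : ∀ᵐ x ∂μ, x ∈ N → 0 < s x)
    {Q : Measure (ℝ × ℝ)} (hQ : IsCoupling Q (μ.restrict N)
      ((P.restrict (N ×ˢ (Set.univ : Set ℝ))).map Prod.snd)) :
    ∫⁻ p, f p ∂Q ≤ ∫⁻ p in N ×ˢ (Set.univ : Set ℝ), f p ∂P := by
  by_contra! hlt
  have hPf := hP.1.isFiniteMeasure
  have hQf := hQ.isFiniteMeasure
  set T := P.restrict (N ×ˢ (Set.univ : Set ℝ)) with hT
  have hTP : T ≤ P := Measure.restrict_le_self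
  have hT1 : T.map Prod.fst = μ.restrict N := by
    rw [← hP.1.1, Measure.restrict_map measurable_fst hN, hT]
    congr 2
    ext p; simp
  have hTfin : ∫⁻ p, f p ∂T ≠ ⊤ := ne_top_of_le_ne_top hfin (lintegral_mono' hTP le_rfl)
  obtain ⟨n, hn⟩ := exists_nat_mul_lt hTfin hlt
  obtain ⟨κ, hκ, hκT, hκQ⟩ := exists_chain T Q (hQ.1.trans hT1.symm) hQ.2 n
  set G : ℕ → Set (ℕ → ℝ × ℝ) := fun k =>
    {ω | ∀ i ≤ n, ((k : ℝ) + 1)⁻¹ ≤ s (ω i).1 ∧ |(ω i).2| ≤ k} with hG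
  have hGm : ∀ k, MeasurableSet (G k) := by
    intro k
    have : G k = ⋂ i ∈ Set.Iic n, {ω : ℕ → ℝ × ℝ | ((k : ℝ) + 1)⁻¹ ≤ s (ω i).1 ∧ |(ω i).2| ≤ k} := by
      ext ω; simp [hG]
    rw [this]
    refine MeasurableSet.biInter (Set.to_countable _) fun i _ => ?_
    refine MeasurableSet.inter ?_ ?_
    · exact measurableSet_le measurable_const
        (hsm.comp (measurable_fst.comp (measurable_pi_apply i)))
    · have hm : Measurable fun ω : ℕ → ℝ × ℝ => (ω i).2 := by fun_prop
      exact measurableSet_le (continuous_abs.measurable.comp hm) measurable_const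
  have hGmono : Monotone G := by
    intro k l hkl ω hω i hi
    have hkl' : (k : ℝ) ≤ l := by exact_mod_cast hkl
    refine ⟨le_trans ?_ (hω i hi).1, (hω i hi).2.trans hkl'⟩
    exact inv_anti₀ (by positivity) (by linarith)
  have hGae : ∀ᵐ ω ∂κ, ω ∈ ⋃ k, G k := by
    have h1 : ∀ i ≤ n, ∀ᵐ ω ∂κ, 0 < s (ω i).1 := by
      intro i hi
      have h2 : ∀ᵐ x ∂(T.map Prod.fst), 0 < s x := by
        rw [hT1]
        exact (ae_restrict_iff' hN).2 hpos
      rw [← hκT i hi, Measure.map_map measurable_fst (measurable_pi_apply i)] at h2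
      exact ae_of_ae_map (measurable_fst.comp (measurable_pi_apply i)).aemeasurable h2
    have h2 : ∀ᵐ ω ∂κ, ∀ i ≤ n, 0 < s (ω i).1 := by
      rw [ae_all_iff]
      intro i
      by_cases hi : i ≤ n
      · filter_upwards [h1 i hi] with ω hω _ using hω
      · exact Filter.Eventually.of_forall fun ω h => absurd h hi
    filter_upwards [h2] with ω hω
    have h3 : ∀ i, ∃ k : ℕ, i ≤ n → ((k : ℝ) + 1)⁻¹ ≤ s (ω i).1 ∧ |(ω i).2| ≤ k := by
      intro i
      obtain ⟨k, hk⟩ := exists_nat_ge (max (s (ω i).1)⁻¹ |(ω i).2|)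
      refine ⟨k, fun hi => ⟨?_, (le_max_right _ _).trans hk⟩⟩
      have := (le_max_left _ _).trans hk
      exact inv_le_of_inv_le₀ (hω i hi) (by linarith)
    choose k hk using h3
    refine Set.mem_iUnion.2 ⟨(Finset.range (n + 1)).sup k, fun i hi => ?_⟩
    have hle : k i ≤ (Finset.range (n + 1)).sup k :=
      Finset.le_sup (Finset.mem_range.2 (by omega))
    have hle' : (k i : ℝ) ≤ ((Finset.range (n + 1)).sup k : ℕ) := by exact_mod_cast hle
    refine ⟨le_trans ?_ (hk i hi).1, (hk i hi).2.trans hle'⟩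
    exact inv_anti₀ (by positivity) (by linarith)
  set F : (ℕ → ℝ × ℝ) → ℝ≥0∞ :=
    fun ω => ∑ i ∈ Finset.range n, f ((ω i).1, (ω (i + 1)).2) with hF
  have hpm : ∀ i j : ℕ, Measurable fun ω : ℕ → ℝ × ℝ => ((ω i).1, (ω j).2) := by
    intro i j; fun_prop
  have hFint : ∫⁻ ω, F ω ∂κ = n * ∫⁻ p, f p ∂Q := by
    rw [lintegral_finsetSum (f := fun (i : ℕ) (ω : ℕ → ℝ × ℝ) => f ((ω i).1, (ω (i + 1)).2)) _
      fun i _ => hf.comp (hpm i (i + 1))]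
    rw [Finset.sum_congr rfl (g := fun _ => ∫⁻ p, f p ∂Q)]
    · simp
    · intro i hi
      rw [← hκQ i (Finset.mem_range.1 hi), lintegral_map hf (hpm i (i + 1))]
  obtain ⟨k, hk⟩ : ∃ k, ((n : ℝ≥0∞) + 1) * ∫⁻ p, f p ∂T < ∫⁻ ω in G k, F ω ∂κ := by
    rw [← lt_iSup_iff, ← setLIntegral_iUnion_of_directed F hGmono.directed_le,
      Measure.restrict_eq_self_of_ae_mem hGae, hFint]
    exact hn
  -- The scaling factor is small enough both for `D ≤ P` and for the slack to absorb the exchange.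
  set ε : NNReal := (((n : NNReal) + 1) * (2 * k * (k + 1) + 1))⁻¹ with hε
  have hε0 : ε ≠ 0 := by rw [hε]; positivity
  have hε1 : ε * (((n : NNReal) + 1) * (2 * k * (k + 1) + 1)) = 1 :=
    inv_mul_cancel₀ (by positivity)
  set θ : Measure (ℕ → ℝ × ℝ) := ε • κ.restrict (G k) with hθ
  have hθG : ∀ᵐ ω ∂θ, ω ∈ G k := Measure.ae_smul_measure (ae_restrict_mem (hGm k)) ε
  have hθκ : θ ≤ ε • κ := by
    rw [hθ]
    intro t
    simp only [Measure.smul_apply]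
    gcongr
    exact Measure.restrict_le_self
  set σ : ℕ → ℕ := fun i => if i < n then i + 1 else 0 with hσ
  have hσn : ∀ i, σ i ≤ n := by
    intro i; simp only [hσ]; split_ifs <;> omega
  set L : ℕ → ℕ → Measure (ℝ × ℝ) := fun i j => θ.map fun ω => ((ω i).1, (ω j).2) with hL
  have hLT : ∀ i ≤ n, L i i ≤ ε • T := by
    intro i hi
    rw [← hκT i hi, ← Measure.map_smul]
    exact Measure.map_mono hθκ (measurable_pi_apply i)
  set D : Measure (ℝ × ℝ) := ∑ i ∈ Finset.range (n + 1), L i i with hD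
  set U : Measure (ℝ × ℝ) := ∑ i ∈ Finset.range (n + 1), L i (σ i) with hU
  have hDT : D ≤ (((n : NNReal) + 1) * ε) • T := by
    calc D ≤ ∑ i ∈ Finset.range (n + 1), ε • T :=
          Finset.sum_le_sum fun i hi => hLT i (by have := Finset.mem_range.1 hi; omega)
      _ = (((n : NNReal) + 1) * ε) • T := by
          rw [Finset.sum_const, Finset.card_range, mul_smul, ← Nat.cast_smul_eq_nsmul NNReal]
          push_cast; rfl
  have hnε : ((n : NNReal) + 1) * ε ≤ 1 := by
    calc ((n : NNReal) + 1) * ε ≤ ((n : NNReal) + 1) * ε * (2 * k * (k + 1) + 1) :=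
          le_mul_of_one_le_right zero_le (le_add_of_nonneg_left zero_le)
      _ = ε * (((n : NNReal) + 1) * (2 * k * (k + 1) + 1)) := by ring
      _ = 1 := hε1
  have hDP : D ≤ P := by
    refine hDT.trans (le_trans ?_ hTP)
    intro t
    rw [Measure.smul_apply]
    exact mul_le_of_le_one_left' (by exact_mod_cast hnε)
  have hL1 : ∀ i j, (L i j).map Prod.fst = θ.map fun ω => (ω i).1 := fun i j =>
    Measure.map_map measurable_fst (hpm i j)
  have hL2 : ∀ i j, (L i j).map Prod.snd = θ.map fun ω => (ω j).2 := fun i j =>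
    Measure.map_map measurable_snd (hpm i j)
  have h1 : U.map Prod.fst = D.map Prod.fst := by
    rw [hU, hD, Measure.map_finset_sum measurable_fst.aemeasurable,
      Measure.map_finset_sum measurable_fst.aemeasurable]
    simp only [hL1]
  have h2 : U.map Prod.snd = D.map Prod.snd := by
    rw [hU, hD, Measure.map_finset_sum measurable_snd.aemeasurable,
      Measure.map_finset_sum measurable_snd.aemeasurable]
    simp only [hL2]
    rw [Finset.sum_range_succ, Finset.sum_range_succ']
    congr 1
    · refine Finset.sum_congr rfl fun i hi => ?_
      simp [hσ, Finset.mem_range.1 hi]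
    · simp [hσ]
  have hLint : ∀ i, ∀ j ≤ n, Integrable (fun p : ℝ × ℝ => p.2) (L i j) := by
    intro i j hj
    rw [hL, integrable_map_measure (by fun_prop) (hpm i j).aemeasurable]
    refine Integrable.of_bound (measurable_snd.comp (hpm i j)).aestronglyMeasurable (k : ℝ) ?_
    filter_upwards [hθG] with ω hω using (hω j hj).2
  have hbound : ∀ A, MeasurableSet A → ∀ i ≤ n, ∀ j ≤ n,
      |∫ p in A ×ˢ (Set.univ : Set ℝ), p.2 ∂(L i j)| ≤ ε * (k * (k + 1)) * ∫ x in A, s x ∂μ := by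
    intro A hA i hi j hj
    have hAm : MeasurableSet (A ×ˢ (Set.univ : Set ℝ)) := hA.prod MeasurableSet.univ
    have hfm : Measurable fun ω : ℕ → ℝ × ℝ => (ω i).1 := by fun_prop
    set B : Set ℝ := A ∩ {x | ((k : ℝ) + 1)⁻¹ ≤ s x} with hB
    have hBm : MeasurableSet B := hA.inter (measurableSet_le measurable_const hsm)
    have e1 : |∫ p in A ×ˢ (Set.univ : Set ℝ), p.2 ∂(L i j)|
        ≤ k * (L i j).real (A ×ˢ (Set.univ : Set ℝ)) := by
      refine norm_setIntegral_le_of_norm_le_const_ae' (f := fun p : ℝ × ℝ => p.2)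
        (measure_lt_top _ _) ?_
      suffices h : ∀ᵐ p ∂(L i j), ‖p.2‖ ≤ k from h.mono fun p hp _ => hp
      rw [hL, ae_map_iff (hpm i j).aemeasurable (measurableSet_le (by fun_prop) measurable_const)]
      filter_upwards [hθG] with ω hω using (hω j hj).2
    have e2 : L i j (A ×ˢ (Set.univ : Set ℝ)) ≤ (ε • μ) B := by
      calc L i j (A ×ˢ (Set.univ : Set ℝ)) = θ {ω | (ω i).1 ∈ A} := by
            rw [hL, Measure.map_apply (hpm i j) hAm]
            congr 1
            ext ω; simp
        _ ≤ θ ((fun ω => (ω i).1) ⁻¹' B) := by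
            refine measure_mono_ae ?_
            filter_upwards [hθG] with ω hω hωA using ⟨hωA, (hω i hi).1⟩
        _ ≤ (ε • κ) ((fun ω => (ω i).1) ⁻¹' B) := hθκ _
        _ = (ε • T.map Prod.fst) B := by
            rw [← hκT i hi, Measure.map_map measurable_fst (measurable_pi_apply i),
              Measure.smul_apply, Measure.smul_apply, Measure.map_apply (by fun_prop) hBm]
            rfl
        _ ≤ (ε • μ) B := by
            rw [hT1]
            simp only [Measure.smul_apply]
            gcongr
            exact Measure.restrict_le_self
    have e3 : (L i j).real (A ×ˢ (Set.univ : Set ℝ)) ≤ ε * μ.real B := by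
      have := ENNReal.toReal_mono (measure_ne_top _ _) e2
      simpa [Measure.real, NNReal.smul_def] using this
    have e4 : ((k : ℝ) + 1)⁻¹ * μ.real B ≤ ∫ x in A, s x ∂μ := by
      have := mul_meas_ge_le_integral_of_nonneg (μ := μ.restrict A)
        (Filter.Eventually.of_forall hs0) hsi.restrict ((k : ℝ) + 1)⁻¹
      rwa [measureReal_restrict_apply (measurableSet_le measurable_const hsm),
        Set.inter_comm] at this
    have e5 : μ.real B ≤ (k + 1) * ∫ x in A, s x ∂μ := by
      rwa [inv_mul_le_iff₀ (by positivity)] at e4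
    calc _ ≤ k * (L i j).real (A ×ˢ (Set.univ : Set ℝ)) := e1
      _ ≤ k * (ε * ((k + 1) * ∫ x in A, s x ∂μ)) := by
          gcongr
          exact e3.trans (by gcongr)
      _ = _ := by ring
  have hsumint : ∀ A, MeasurableSet A → ∀ τ : ℕ → ℕ, (∀ i ≤ n, τ i ≤ n) →
      |∫ p in A ×ˢ (Set.univ : Set ℝ), p.2 ∂(∑ i ∈ Finset.range (n + 1), L i (τ i))|
        ≤ (n + 1) * (ε * (k * (k + 1)) * ∫ x in A, s x ∂μ) := by
    intro A hA τ hτ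
    have hle : ∀ i ∈ Finset.range (n + 1), i ≤ n := fun i hi => by
      have := Finset.mem_range.1 hi; omega
    have hAm : MeasurableSet (A ×ˢ (Set.univ : Set ℝ)) := hA.prod MeasurableSet.univ
    have e0 : (∑ i ∈ Finset.range (n + 1), L i (τ i)).restrict (A ×ˢ (Set.univ : Set ℝ))
        = ∑ i ∈ Finset.range (n + 1), (L i (τ i)).restrict (A ×ˢ (Set.univ : Set ℝ)) := by
      ext t ht
      simp [Measure.restrict_apply ht, Measure.finsetSum_apply]
    rw [e0, integral_finsetSum_measure fun i hi => (hLint i _ (hτ i (hle i hi))).restrict]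
    refine (Finset.abs_sum_le_sum_abs _ _).trans ?_
    refine (Finset.sum_le_card_nsmul _ _ _ fun i hi =>
      hbound A hA i (hle i hi) _ (hτ i (hle i hi))).trans ?_
    simp
  have hUD : ∀ A, MeasurableSet A → ∫ p in A ×ˢ (Set.univ : Set ℝ), p.2 ∂U
      ≤ ∫ p in A ×ˢ (Set.univ : Set ℝ), p.2 ∂D + ∫ x in A, s x ∂μ := by
    intro A hA
    have e1 := (abs_le.1 (hsumint A hA σ fun i _ => hσn i)).2
    have e2 := (abs_le.1 (hsumint A hA id fun i hi => hi)).1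
    simp only [id] at e2
    have e3 : 0 ≤ ∫ x in A, s x ∂μ := integral_nonneg hs0
    have e4 : (ε : ℝ) * ((n + 1) * (2 * k * (k + 1) + 1)) = 1 := by exact_mod_cast hε1
    have e5 : 2 * ((n + 1) * (ε * (k * (k + 1)) * ∫ x in A, s x ∂μ)) ≤ ∫ x in A, s x ∂μ := by
      have e6 : 0 ≤ (ε : ℝ) * (n + 1) := by positivity
      have : (2 * ((n + 1) * (ε * (k * (k + 1)))) : ℝ) ≤ 1 := by linarith
      nlinarith
    linarith
  have hfinal := lintegral_le_of_perturbation hμ hν hP hfin hopt hs hDP h1 h2 hUD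
  have hDf : ∫⁻ p, f p ∂D ≤ ε * (((n : ℝ≥0∞) + 1) * ∫⁻ p, f p ∂T) := by
    refine (lintegral_mono' hDT le_rfl).trans (le_of_eq ?_)
    rw [lintegral_smul_measure, ENNReal.smul_def]
    simp only [smul_eq_mul]
    push_cast
    ring
  have hUf : ε * ∫⁻ ω in G k, F ω ∂κ ≤ ∫⁻ p, f p ∂U := by
    rw [hU, lintegral_finsetSum_measure, Finset.sum_range_succ]
    refine le_trans (le_of_eq ?_) le_self_add
    have e1 : (ε : ℝ≥0∞) * ∫⁻ ω in G k, F ω ∂κ = ∫⁻ ω, F ω ∂θ := by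
      rw [hθ, lintegral_smul_measure, ENNReal.smul_def, smul_eq_mul]
    rw [e1, lintegral_finsetSum (f := fun (i : ℕ) (ω : ℕ → ℝ × ℝ) => f ((ω i).1, (ω (i + 1)).2)) _
      fun i _ => hf.comp (hpm i (i + 1))]
    refine Finset.sum_congr rfl fun i hi => ?_
    rw [hL, lintegral_map hf (hpm i (σ i))]
    simp [hσ, Finset.mem_range.1 hi]
  have hle := (hUf.trans hfinal).trans hDf
  rw [ENNReal.mul_le_mul_iff_right (by exact_mod_cast hε0) ENNReal.coe_ne_top] at hle
  exact absurd hle (not_le.2 hk)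

/-! ### An optimizer with maximal strict part -/

lemma slack_pos_of_defect_le {μ : Measure ℝ} {P P' : Measure (ℝ × ℝ)} {s s' : ℝ → ℝ} {c : ℝ}
    (hc : 0 < c) (hs0 : ∀ x, 0 ≤ s x) (hsi : Integrable s μ)
    (hs : ∀ A, MeasurableSet A → defect P A = ∫ x in A, s x ∂μ)
    (hsm' : Measurable s') (hs0' : ∀ x, 0 ≤ s' x)
    (hs' : ∀ A, MeasurableSet A → defect P' A = ∫ x in A, s' x ∂μ)
    (hle : ∀ A, MeasurableSet A → c * defect P A ≤ defect P' A) :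
    ∀ᵐ x ∂μ, 0 < s x → 0 < s' x := by
  have hA : MeasurableSet {x | s' x = 0} := hsm' (measurableSet_singleton 0)
  have h1 := hle _ hA
  have h2 : ∫ x in {x | s' x = 0}, s' x ∂μ = 0 := setIntegral_eq_zero_of_forall_eq_zero fun x hx => hx
  rw [hs _ hA, hs' _ hA, h2] at h1
  have h3 : 0 ≤ ∫ x in {x | s' x = 0}, s x ∂μ := integral_nonneg hs0
  have h4 : ∫ x in {x | s' x = 0}, s x ∂μ = 0 := by nlinarith
  rw [integral_eq_zero_iff_of_nonneg hs0 hsi.restrict] at h4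
  have h5 := (ae_restrict_iff' hA).1 h4
  filter_upwards [h5] with x hx hpos
  rcases (hs0' x).eq_or_lt with h | h
  · exact absurd (hx h.symm) hpos.ne'
  · exact h

/-- Among all optimizers there is one whose set of strict supermartingale points is `μ`-essentially
largest: no optimizer's strict set can properly contain it up to null sets. -/
lemma exists_maximal_slack {μ ν : Measure ℝ} [IsFiniteMeasure μ]
    (hμ : Integrable (fun x : ℝ => x) μ) (hν : Integrable (fun x : ℝ => x) ν)
    (f : ℝ × ℝ → ℝ≥0∞) (V : ℝ≥0∞)
    (hne : ∃ P, IsSupermartingaleCoupling P μ ν ∧ ∫⁻ p, f p ∂P = V) :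
    ∃ (P : Measure (ℝ × ℝ)) (s : ℝ → ℝ), IsSupermartingaleCoupling P μ ν ∧ ∫⁻ p, f p ∂P = V ∧
      Measurable s ∧ (∀ x, 0 ≤ s x) ∧ Integrable s μ ∧
      (∀ A, MeasurableSet A → defect P A = ∫ x in A, s x ∂μ) ∧
      ∀ (P' : Measure (ℝ × ℝ)) (s' : ℝ → ℝ), IsSupermartingaleCoupling P' μ ν →
        ∫⁻ p, f p ∂P' = V → Measurable s' → (∀ x, 0 ≤ s' x) → Integrable s' μ →
        (∀ A, MeasurableSet A → defect P' A = ∫ x in A, s' x ∂μ) →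
        (∀ᵐ x ∂μ, 0 < s x → 0 < s' x) → ∀ᵐ x ∂μ, 0 < s' x → 0 < s x := by
  set T : Set ℝ≥0∞ := {a | ∃ (P : Measure (ℝ × ℝ)) (s : ℝ → ℝ),
      (IsSupermartingaleCoupling P μ ν ∧ ∫⁻ p, f p ∂P = V ∧
      Measurable s ∧ (∀ x, 0 ≤ s x) ∧ Integrable s μ ∧
      (∀ A, MeasurableSet A → defect P A = ∫ x in A, s x ∂μ)) ∧ a = μ {x | 0 < s x}} with hT
  have hTne : T.Nonempty := by
    obtain ⟨P, hP, hV⟩ := hne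
    obtain ⟨s, h1, h2, h3, h4⟩ := exists_slack hμ hν hP
    exact ⟨_, P, s, ⟨hP, hV, h1, h2, h3, h4⟩, rfl⟩
  obtain ⟨u, -, hu, huT⟩ := exists_seq_tendsto_sSup hTne (OrderTop.bddAbove T)
  choose P s hPs hus using huT
  obtain ⟨W, hW, hWV, hWP⟩ := exists_mixture hμ hν f V P (fun k => (hPs k).1) fun k => (hPs k).2.1
  obtain ⟨w, hwm, hw0, hwi, hw⟩ := exists_slack hμ hν hW
  have hsup : sSup T ≤ μ {x | 0 < w x} := by
    refine le_of_tendsto' hu fun k => ?_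
    rw [hus k]
    obtain ⟨-, -, -, h2, h3, h4⟩ := hPs k
    exact measure_mono_ae (slack_pos_of_defect_le (by positivity) h2 h3 h4 hwm hw0 hw (hWP k).2)
  refine ⟨W, w, hW, hWV, hwm, hw0, hwi, hw, fun P' s' hP' hV' h1 h2 h3 h4 h5 => ?_⟩
  have hle : μ {x | 0 < s' x} ≤ μ {x | 0 < w x} :=
    (le_sSup (show μ {x | 0 < s' x} ∈ T from ⟨P', s', ⟨hP', hV', h1, h2, h3, h4⟩, rfl⟩)).trans hsup
  have heq : ({x | 0 < w x} : Set ℝ) =ᵐ[μ] {x | 0 < s' x} :=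
    ae_eq_of_ae_subset_of_measure_ge h5 hle
      (measurableSet_lt measurable_const hwm).nullMeasurableSet (measure_ne_top _ _)
  exact heq.symm.le

/-! ### The decomposition -/

lemma map_fst_restrict_prod {P : Measure (ℝ × ℝ)} {μ : Measure ℝ} (h : P.map Prod.fst = μ)
    {A : Set ℝ} (hA : MeasurableSet A) :
    (P.restrict (A ×ˢ (Set.univ : Set ℝ))).map Prod.fst = μ.restrict A := by
  rw [← h, Measure.restrict_map measurable_fst hA]
  congr 2
  ext p; simp

lemma restrict_prod_add_compl (P : Measure (ℝ × ℝ)) {M : Set ℝ} (hM : MeasurableSet M) :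
    P.restrict (M ×ˢ (Set.univ : Set ℝ)) + P.restrict (Mᶜ ×ˢ (Set.univ : Set ℝ)) = P := by
  have : Mᶜ ×ˢ (Set.univ : Set ℝ) = (M ×ˢ (Set.univ : Set ℝ))ᶜ := by ext p; simp
  rw [this, Measure.restrict_add_restrict_compl (hM.prod MeasurableSet.univ)]

/-- Extremal Decomposition, Corollary 4.2. If the supermartingale
optimal transport value for a Borel `f : ℝ² → [0,∞]` is finite, there is a Borel set
`M ⊆ ℝ` such that for every optimizer `P`: `P|_{M×ℝ}` is an optimal martingale transport
between its marginals, and `P|_{(ℝ∖M)×ℝ}` is an optimal Monge–Kantorovich transport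
between its marginals. -/
theorem extremal_decomposition
    (μ ν : Measure ℝ) (hμp : IsProbabilityMeasure μ) (hνp : IsProbabilityMeasure ν)
    (hμ : FiniteFirstMoment μ) (hν : FiniteFirstMoment ν) (h : CDOrder μ ν)
    (f : ℝ × ℝ → ℝ≥0∞) (hf : Measurable f)
    (hS : (⨆ (P : Measure (ℝ × ℝ)) (_ : IsSupermartingaleCoupling P μ ν),
        ∫⁻ p, f p ∂P) < ⊤) :
    ∃ M : Set ℝ, MeasurableSet M ∧
      ∀ P : Measure (ℝ × ℝ), IsSupermartingaleCoupling P μ ν →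
        (∫⁻ p, f p ∂P =
          ⨆ (Q : Measure (ℝ × ℝ)) (_ : IsSupermartingaleCoupling Q μ ν),
            ∫⁻ p, f p ∂Q) →
        (∫⁻ p in M ×ˢ (Set.univ : Set ℝ), f p ∂P =
            ⨆ (Q : Measure (ℝ × ℝ)) (_ : IsMartingaleCoupling Q (μ.restrict M)
              ((P.restrict (M ×ˢ (Set.univ : Set ℝ))).map Prod.snd)),
              ∫⁻ p, f p ∂Q) ∧
        (∫⁻ p in Mᶜ ×ˢ (Set.univ : Set ℝ), f p ∂P =
            ⨆ (Q : Measure (ℝ × ℝ)) (_ : IsCoupling Q (μ.restrict Mᶜ)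
              ((P.restrict (Mᶜ ×ˢ (Set.univ : Set ℝ))).map Prod.snd)),
              ∫⁻ p, f p ∂Q) := by
  set V := ⨆ (P : Measure (ℝ × ℝ)) (_ : IsSupermartingaleCoupling P μ ν), ∫⁻ p, f p ∂P with hV
  have hle : ∀ P, IsSupermartingaleCoupling P μ ν → ∫⁻ p, f p ∂P ≤ V := fun P hP =>
    le_iSup₂ (f := fun (P : Measure (ℝ × ℝ)) (_ : IsSupermartingaleCoupling P μ ν) =>
      ∫⁻ p, f p ∂P) P hP
  by_cases hne : ∃ P, IsSupermartingaleCoupling P μ ν ∧ ∫⁻ p, f p ∂P = V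
  swap
  · exact ⟨∅, MeasurableSet.empty, fun P hP hPV => absurd ⟨P, hP, hPV⟩ hne⟩
  have hμ1 := hμ.2
  have hν1 := hν.2
  obtain ⟨P₀, s₀, hP₀, hP₀V, hs₀m, hs₀0, hs₀i, hs₀, hmax⟩ :=
    exists_maximal_slack hμ1 hν1 f V hne
  have hM : MeasurableSet {x | s₀ x = 0} := hs₀m (measurableSet_singleton 0)
  set M : Set ℝ := {x | s₀ x = 0} with hMdef
  refine ⟨M, hM, fun P hP hPV => ?_⟩
  have hPf := hP.1.isFiniteMeasure
  have hPfin : ∫⁻ p, f p ∂P ≠ ⊤ := hPV ▸ hS.ne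
  have hsplit := restrict_prod_add_compl P hM
  -- `W` mixes `P` with the maximal optimizer; its strict set is `Mᶜ` up to null sets.
  obtain ⟨W, hW, hWV, hWP⟩ := exists_mixture hμ1 hν1 f V (fun k => if k = 0 then P else P₀)
    (fun k => by split_ifs <;> assumption) (fun k => by split_ifs <;> assumption)
  obtain ⟨w, hwm, hw0, hwi, hw⟩ := exists_slack hμ1 hν1 hW
  have hWP0 := hWP 0
  have hWP1 := (hWP 1).2
  simp only [if_true, one_ne_zero, if_false, zero_add, pow_one] at hWP0 hWP1
  obtain ⟨hcP, hdP⟩ := hWP0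
  have hpos : ∀ᵐ x ∂μ, 0 < s₀ x → 0 < w x :=
    slack_pos_of_defect_le (by positivity) hs₀0 hs₀i hs₀ hwm hw0 hw hWP1
  have hpos' := hmax W w hW hWV hwm hw0 hwi hw hpos
  have hdefM : ∀ A, MeasurableSet A → A ⊆ M → defect P A = 0 := by
    intro A hA hAM
    have h1 : defect W A = 0 := by
      rw [hw A hA]
      refine setIntegral_eq_zero_of_ae_eq_zero ?_
      filter_upwards [hpos'] with x hx hxA
      have h0 : s₀ x = 0 := hAM hxA
      exact le_antisymm (not_lt.1 fun h => (hx h).ne' h0) (hw0 x)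
    have h2 := hdP A hA
    have h3 := (hP.1.supermartingale_iff hμ1 hν1).1 hP.2 A hA
    linarith
  constructor
  · refine le_antisymm ?_ (iSup₂_le fun Q hQ => ?_)
    · refine le_iSup₂ (f := fun (Q : Measure (ℝ × ℝ)) (_ : IsMartingaleCoupling Q (μ.restrict M)
        ((P.restrict (M ×ˢ (Set.univ : Set ℝ))).map Prod.snd)) => ∫⁻ p, f p ∂Q)
        (P.restrict (M ×ˢ (Set.univ : Set ℝ)))
        ⟨⟨map_fst_restrict_prod hP.1.1 hM, rfl⟩, fun A hA _ => ?_⟩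
      rw [Measure.restrict_restrict (hA.prod MeasurableSet.univ), Set.prod_inter_prod,
        Set.univ_inter]
      have h1 := hP.1.defect_eq hμ1 hν1 (A ∩ M)
      rw [hdefM _ (hA.inter hM) Set.inter_subset_right] at h1
      linarith
    -- A better martingale coupling on `M`, completed by `P` off `M`, would beat `P`.
    · have hc : IsCoupling (Q + P.restrict (Mᶜ ×ˢ (Set.univ : Set ℝ))) μ ν := by
        constructor
        · rw [Measure.map_add _ _ measurable_fst, hQ.1.1, map_fst_restrict_prod hP.1.1 hM.compl,
            Measure.restrict_add_restrict_compl hM]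
        · rw [Measure.map_add _ _ measurable_snd, hQ.1.2, ← Measure.map_add _ _ measurable_snd,
            hsplit, hP.1.2]
      have hdiff : Integrable (fun p : ℝ × ℝ => p.1 - p.2)
          (Q + P.restrict (Mᶜ ×ˢ (Set.univ : Set ℝ))) :=
        (hc.integrable_fst hμ1).sub (hc.integrable_snd hν1)
      have hS' : SupermartingaleProperty (Q + P.restrict (Mᶜ ×ˢ (Set.univ : Set ℝ))) := by
        rw [hc.supermartingale_iff hμ1 hν1]
        intro A hA
        have h1 : defect (Q + P.restrict (Mᶜ ×ˢ (Set.univ : Set ℝ))) A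
            = defect Q A + defect P (A ∩ Mᶜ) := by
          have hi1 := (hdiff.mono_measure (Measure.le_add_right le_rfl : Q ≤ _)).integrableOn
            (s := A ×ˢ (Set.univ : Set ℝ))
          have hi2 := (hdiff.mono_measure (Measure.le_add_left le_rfl :
            P.restrict (Mᶜ ×ˢ (Set.univ : Set ℝ)) ≤ _)).integrableOn
            (s := A ×ˢ (Set.univ : Set ℝ))
          unfold defect
          rw [Measure.restrict_add, integral_add_measure hi1 hi2,
            Measure.restrict_restrict (hA.prod MeasurableSet.univ), Set.prod_inter_prod,
            Set.univ_inter]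
        have h2 : defect Q A = 0 := by
          unfold defect
          rw [integral_sub, hQ.2 A hA (Set.subset_univ A), sub_self]
          · exact ((hc.integrable_fst hμ1).mono_measure
              (Measure.le_add_right le_rfl : Q ≤ _)).integrableOn
          · exact ((hc.integrable_snd hν1).mono_measure
              (Measure.le_add_right le_rfl : Q ≤ _)).integrableOn
        rw [h1, h2, zero_add]
        exact (hP.1.supermartingale_iff hμ1 hν1).1 hP.2 _ (hA.inter hM.compl)
      have h1 := hle _ ⟨hc, hS'⟩
      rw [← hPV, ← hsplit] at h1
      rw [← hsplit] at hPfin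
      rw [lintegral_add_measure] at h1 hPfin
      rw [lintegral_add_measure, hsplit] at h1
      exact (ENNReal.add_le_add_iff_right (fun h => hPfin (by rw [h, add_top]))).1 h1
  · refine le_antisymm ?_ (iSup₂_le fun Q hQ => ?_)
    · exact le_iSup₂ (f := fun (Q : Measure (ℝ × ℝ)) (_ : IsCoupling Q (μ.restrict Mᶜ)
        ((P.restrict (Mᶜ ×ˢ (Set.univ : Set ℝ))).map Prod.snd)) => ∫⁻ p, f p ∂Q)
        (P.restrict (Mᶜ ×ˢ (Set.univ : Set ℝ))) ⟨map_fst_restrict_prod hP.1.1 hM.compl, rfl⟩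
    -- Exchanging inside `W` its part `P/2` for `Q/2` gives a competitor of `W` over `Mᶜ`.
    · have hc2 : IsFiniteMeasure ((2 : ℝ≥0∞)⁻¹ • P) := Measure.smul_finite P (by simp)
      have hWc : W - (2 : ℝ≥0∞)⁻¹ • P + (2 : ℝ≥0∞)⁻¹ • P = W :=
        Measure.sub_add_cancel_of_le hcP
      set Z := W - (2 : ℝ≥0∞)⁻¹ • P with hZ
      have hWr : Z.restrict (Mᶜ ×ˢ (Set.univ : Set ℝ))
          + (2 : ℝ≥0∞)⁻¹ • P.restrict (Mᶜ ×ˢ (Set.univ : Set ℝ))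
          = W.restrict (Mᶜ ×ˢ (Set.univ : Set ℝ)) := by
        rw [← Measure.restrict_smul, ← Measure.restrict_add, hWc]
      have hcomp : IsCoupling (Z.restrict (Mᶜ ×ˢ (Set.univ : Set ℝ)) + (2 : ℝ≥0∞)⁻¹ • Q)
          (μ.restrict Mᶜ) ((W.restrict (Mᶜ ×ˢ (Set.univ : Set ℝ))).map Prod.snd) := by
        constructor
        · rw [Measure.map_add _ _ measurable_fst, Measure.map_smul, hQ.1,
            ← map_fst_restrict_prod hP.1.1 hM.compl, ← Measure.map_smul,
            ← Measure.map_add _ _ measurable_fst, hWr, map_fst_restrict_prod hW.1.1 hM.compl,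
            map_fst_restrict_prod hP.1.1 hM.compl]
        · rw [Measure.map_add _ _ measurable_snd, Measure.map_smul, hQ.2, ← Measure.map_smul,
            ← Measure.map_add _ _ measurable_snd, hWr]
      have hWfin : ∫⁻ p, f p ∂W ≠ ⊤ := hWV ▸ hS.ne
      have h1 := optimal_of_slack_pos hμ1 hν1 hf hW hWfin (fun P' hP' => hWV ▸ hle P' hP')
        hwm hw0 hwi hw hM.compl (hpos.mono fun x hx hxM =>
          hx (lt_of_le_of_ne (hs₀0 x) (fun h => hxM h.symm))) hcomp
      have hZfin : ∫⁻ p in Mᶜ ×ˢ (Set.univ : Set ℝ), f p ∂Z ≠ ⊤ :=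
        ne_top_of_le_ne_top hWfin (lintegral_mono' (Measure.restrict_le_self.trans
          (by rw [← hWc]; exact Measure.le_add_right le_rfl)) le_rfl)
      rw [← hWr, lintegral_add_measure, lintegral_add_measure, lintegral_smul_measure,
        lintegral_smul_measure, ENNReal.add_le_add_iff_left hZfin, smul_eq_mul, smul_eq_mul,
        ENNReal.mul_le_mul_iff_right (by simp) (by simp)] at h1
      exact h1
end
end

section
/- Let μ ≤_cd ν be finite Borel measures on ℝ with finite first moments and suppose the pair (μ,ν) is irreducible. Then a Borel set B ⊆ ℝ² satisfies P(B) = 0 for every P ∈ S(μ,ν) if and only if π(B) = 0 for every π ∈ Π(μ,ν); that is, the S(μ,ν)-polar sets and the Π(μ,ν)-polar sets coincide. -/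
/-!
Only one inclusion needs an argument: if some coupling `π` of `μ` and `ν` charges `B`, then so does
a supermartingale coupling. Let `I = {put μ < put ν}`, an open interval carrying `μ`.

By exhaustion, `π` charges `B` inside a box `K × W`, where `K = [a, b]` is a compact subinterval of
`I` and `W` is a bounded part of `K ∪ Iᶜ` (`exists_box_measure_ne_zero`). Let `m` be the restriction
of `π` to this part of `B`. Its upward drift is compensated by sending mass to a `ν`-charged set
below `a`; such a set exists because `put ν a > put μ a ≥ 0`. If `μ` and `ν` have the same
barycentre, the downward drift is likewise compensated by a `ν`-charged set above `b`. The
compensators are product measures (`exists_compensation`), so `Q = m + compensators` is a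
supermartingale coupling of its marginals (a martingale one if the barycentres agree), and the
marginals are bounded by multiples of `μ` and of `ν` restricted to `[a', b'] ∪ Iᶜ`, `a', b' ∈ I`.

The put gap of the marginals of `Q` is then dominated by a multiple of `put ν - put μ`
(`exists_gap_domination`). On compact subsets of `I` this is continuity; at a finite left endpoint
`l` of `I` both sides are of order `ν {l} * (t - l)`, because `μ` does not charge `l`
(`put_restrict_le`). On the right the same estimate holds by reflection when the barycentres agree
(`call_restrict_le`); otherwise the gap `put ν - put μ` stays bounded away from zero near `+∞`.

Hence for small `c > 0` the measures `μ - c Q₁` and `ν - c Q₂` still satisfy the order relation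
required by Strassen's theorem, and adding `c Q` to a supermartingale coupling of these yields an
element of `S(μ, ν)` that charges `B` (`exists_supermartingaleCoupling_ge`).

Strassen's theorem itself (`exists_supermartingaleCoupling`) is proved from quantile functions `f`
and `g` of `μ` and `ν`: the order says that `∫₀ᵘ g ≤ ∫₀ᵘ f` for every `u`, so levels with `g > f`
can be matched to earlier levels with `g < f`, and swapping targets between matched levels turns
the comonotone coupling into a supermartingale coupling (`exists_supermartingale_of_swap`).
-/

open MeasureTheory Set
open scoped ENNReal

noncomputable section

/-! ### Quantile functions -/

/-- `q` is a quantile function of the finite measure `m`: on `(0, m(ℝ))` it is the generalized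
inverse of the distribution function, expressed as a Galois connection. -/
def IsQuantile (m : Measure ℝ) (q : ℝ → ℝ) : Prop :=
  Measurable q ∧ ∀ s ∈ Ioo 0 (m.real univ), ∀ x, q s ≤ x ↔ s ≤ m.real (Iic x)

lemma exists_quantile (m : Measure ℝ) [IsFiniteMeasure m] : ∃ q, IsQuantile m q := by
  classical
  set F : ℝ → ℝ := fun x => m.real (Iic x) with hF
  have hmono : Monotone F := fun x y hxy => measureReal_mono (Iic_subset_Iic.2 hxy)
  have htop : Filter.Tendsto F Filter.atTop (nhds (m.real univ)) :=
    (ENNReal.tendsto_toReal (measure_ne_top m _)).comp (tendsto_measure_Iic_atTop m)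
  have hbot : Filter.Tendsto F Filter.atBot (nhds 0) := by
    have h0 : Filter.Tendsto (fun x : ℝ => m (Iic x)) Filter.atBot (nhds (m (⋂ x : ℝ, Iic x))) :=
      tendsto_measure_iInter_atBot (fun x => measurableSet_Iic.nullMeasurableSet)
        (fun x y hxy => Iic_subset_Iic.2 hxy) ⟨0, measure_ne_top _ _⟩
    rw [iInter_Iic_eq_empty_iff.2 (by
      rw [Function.Surjective.range_eq (fun x => ⟨x, rfl⟩)]; exact not_bddBelow_univ),
      measure_empty] at h0
    exact (ENNReal.tendsto_toReal (a := 0) (by simp)).comp h0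
  have hright : ∀ x s, (∀ y, x < y → s ≤ F y) → s ≤ F x := by
    intro x s hs
    have h1 : Filter.Tendsto (fun n : ℕ => m (Iic (x + 1 / ((n : ℝ) + 1)))) Filter.atTop
        (nhds (m (⋂ n : ℕ, Iic (x + 1 / ((n : ℝ) + 1))))) := by
      apply tendsto_measure_iInter_atTop
      · intro n; exact measurableSet_Iic.nullMeasurableSet
      · intro i j hij
        apply Iic_subset_Iic.2
        gcongr
      · exact ⟨0, measure_ne_top _ _⟩
    have h2 : (⋂ n : ℕ, Iic (x + 1 / ((n : ℝ) + 1))) = Iic x := by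
      ext y
      simp only [mem_iInter, mem_Iic]
      constructor
      · intro hy
        have := tendsto_one_div_add_atTop_nhds_zero_nat (𝕜 := ℝ)
        have h3 := (tendsto_const_nhds (x := x)).add this
        rw [add_zero] at h3
        exact ge_of_tendsto' h3 hy
      · intro hy n
        have : (0 : ℝ) ≤ 1 / ((n : ℝ) + 1) := by positivity
        linarith
    rw [h2] at h1
    have h4 := (ENNReal.tendsto_toReal (measure_ne_top m _)).comp h1
    refine ge_of_tendsto' h4 fun n => hs _ ?_
    have : (0 : ℝ) < 1 / ((n : ℝ) + 1) := by positivity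
    linarith
  let q : ℝ → ℝ := fun s => if s ∈ Ioo 0 (m.real univ) then sInf {x | s ≤ F x} else 0
  have hG : ∀ s ∈ Ioo 0 (m.real univ), ∀ x, q s ≤ x ↔ s ≤ F x := by
    intro s hs x
    have hq : q s = sInf {x | s ≤ F x} := if_pos hs
    have hne : {x | s ≤ F x}.Nonempty := by
      obtain ⟨y, hy⟩ := (htop.eventually (lt_mem_nhds hs.2)).exists
      exact ⟨y, hy.le⟩
    have hbd : BddBelow {x | s ≤ F x} := by
      obtain ⟨y, hy⟩ := (hbot.eventually (gt_mem_nhds hs.1)).exists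
      refine ⟨y, fun z hz => ?_⟩
      by_contra hlt
      push Not at hlt
      exact absurd (hmono hlt.le) (not_le.2 (lt_of_lt_of_le hy hz))
    rw [hq]
    constructor
    · intro hx
      apply hright
      intro y hy
      obtain ⟨z, hz, hzy⟩ := (csInf_lt_iff hbd hne).1 (lt_of_le_of_lt hx hy)
      exact le_trans hz (hmono hzy.le)
    · intro hx
      exact csInf_le hbd hx
  refine ⟨q, ?_, hG⟩
  refine measurable_of_Iic fun x => ?_
  have : q ⁻¹' Iic x = (Ioo 0 (m.real univ) ∩ Iic (F x)) ∪
      ((Ioo 0 (m.real univ))ᶜ ∩ {_s | (0 : ℝ) ≤ x}) := by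
    ext s
    by_cases hs : s ∈ Ioo 0 (m.real univ)
    · have := hG s hs x
      simp only [mem_preimage, mem_Iic, this, mem_union, mem_inter_iff, hs, true_and,
        mem_compl_iff, not_true, false_and, or_false]
    · have : q s = 0 := if_neg hs
      simp only [mem_preimage, mem_Iic, this, mem_union, mem_inter_iff, hs, false_and,
        mem_compl_iff, not_false_eq_true, true_and, false_or, mem_ofPred_eq]
  rw [this]
  exact (measurableSet_Ioo.inter measurableSet_Iic).union
    (measurableSet_Ioo.compl.inter (MeasurableSet.const _))

lemma IsQuantile.monotoneOn {m : Measure ℝ} {q : ℝ → ℝ} (hq : IsQuantile m q) :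
    MonotoneOn q (Ioo 0 (m.real univ)) := by
  intro s hs t ht hst
  rw [hq.2 s hs]
  exact hst.trans ((hq.2 t ht _).1 le_rfl)

lemma IsQuantile.map_eq {m : Measure ℝ} [IsFiniteMeasure m] {q : ℝ → ℝ} (hq : IsQuantile m q) :
    (volume.restrict (Ioo 0 (m.real univ))).map q = m := by
  have : IsFiniteMeasure ((volume.restrict (Ioo 0 (m.real univ))).map q) := by infer_instance
  refine Measure.ext_of_Iic _ _ fun x => ?_
  rw [Measure.map_apply hq.1 measurableSet_Iic,
    Measure.restrict_apply (hq.1 measurableSet_Iic)]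
  have hle : m.real (Iic x) ≤ m.real univ := measureReal_mono (subset_univ _)
  have h1 : Ioo 0 (m.real (Iic x)) ⊆ q ⁻¹' Iic x ∩ Ioo 0 (m.real univ) := fun s hs =>
    ⟨(hq.2 s ⟨hs.1, hs.2.trans_le hle⟩ x).2 hs.2.le, hs.1, hs.2.trans_le hle⟩
  have h2 : q ⁻¹' Iic x ∩ Ioo 0 (m.real univ) ⊆ Ioc 0 (m.real (Iic x)) := fun s hs =>
    ⟨hs.2.1, (hq.2 s hs.2 x).1 hs.1⟩
  have h3 : ENNReal.ofReal (m.real (Iic x)) = m (Iic x) := ofReal_measureReal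
  refine le_antisymm ?_ ?_
  · refine (measure_mono h2).trans ?_
    rw [Real.volume_Ioc, sub_zero, h3]
  · refine le_trans ?_ (measure_mono h1)
    rw [Real.volume_Ioo, sub_zero, h3]

/-- First-order stochastic dominance with unequal masses: the smaller measure `β` is coupled with
a part of `α` lying to its left. The quantile coupling does it. -/
lemma exists_ordered_coupling (α β : Measure ℝ) [IsFiniteMeasure α] [IsFiniteMeasure β]
    (hle : ∀ u, β.real (Iic u) ≤ α.real (Iic u)) (hmass : β.real univ ≤ α.real univ) :
    ∃ γ : Measure (ℝ × ℝ), γ.map Prod.fst ≤ α ∧ γ.map Prod.snd = β ∧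
      ∀ᵐ p ∂γ, p.1 ≤ p.2 := by
  obtain ⟨a, ha⟩ := exists_quantile α
  obtain ⟨b, hb⟩ := exists_quantile β
  have hab : Measurable fun s => (a s, b s) := ha.1.prodMk hb.1
  refine ⟨(volume.restrict (Ioo 0 (β.real univ))).map fun s => (a s, b s), ?_, ?_, ?_⟩
  · rw [Measure.map_map measurable_fst hab]
    conv_rhs => rw [← ha.map_eq]
    exact Measure.map_mono (Measure.restrict_mono (Ioo_subset_Ioo_right hmass) le_rfl) ha.1
  · rw [Measure.map_map measurable_snd hab]
    exact hb.map_eq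
  · rw [ae_map_iff hab.aemeasurable (measurableSet_le measurable_fst measurable_snd)]
    refine (ae_restrict_iff' measurableSet_Ioo).2 (Filter.Eventually.of_forall fun s hs => ?_)
    rw [ha.2 s ⟨hs.1, hs.2.trans_le hmass⟩]
    exact ((hb.2 s hs _).1 le_rfl).trans (hle _)

/-! ### Strassen theorem for supermartingale couplings -/

lemma real_withDensity_ofReal {κ : Measure ℝ} {h : ℝ → ℝ} (hh : Integrable h κ) {A : Set ℝ}
    (hA : MeasurableSet A) :
    (κ.withDensity fun u => ENNReal.ofReal (h u)).real A = ∫ u in A, max (h u) 0 ∂κ := by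
  have hp : AEStronglyMeasurable (fun u => max (h u) 0) (κ.restrict A) :=
    hh.pos_part.aestronglyMeasurable.restrict
  rw [integral_eq_lintegral_of_nonneg_ae (f := fun u => max (h u) 0)
    (Filter.Eventually.of_forall fun u => le_max_right _ _) hp, measureReal_def, withDensity_apply _ hA]
  congr 1
  refine lintegral_congr fun u => ?_
  rw [ENNReal.ofReal_max, ENNReal.ofReal_zero, max_eq_left zero_le]

/-- Repairing the comonotone coupling `(f, g)` by swaps. Mass at levels `u` with `g u < f u` is
matched (by an ordered coupling `γ`) with mass at levels `v ≥ u` with `f v < g v`; part of the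
mass at `u` is sent to `g v` instead of `g u`, and the same amount at `v` to `g u` instead of
`g v`. The weight `1 / (g v - g u)` makes each swap transfer exactly the required drift, and
`g u < f u ≤ f v < g v` keeps the swapped mass below the available mass. -/
lemma exists_supermartingale_of_swap (κ : Measure ℝ) [IsFiniteMeasure κ] (f g : ℝ → ℝ)
    (hfm : Measurable f) (hgm : Measurable g) (hf : Integrable f κ) (hg : Integrable g κ)
    (s : Set ℝ) (hs : ∀ᵐ u ∂κ, u ∈ s) (hmono : MonotoneOn f s)
    (hint : ∀ u, ∫ x in Iic u, g x ∂κ ≤ ∫ x in Iic u, f x ∂κ)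
    (htot : ∫ x, g x ∂κ ≤ ∫ x, f x ∂κ) :
    ∃ P, IsSupermartingaleCoupling P (κ.map f) (κ.map g) := by
  set α : Measure ℝ := κ.withDensity fun u => ENNReal.ofReal (f u - g u) with hα
  set β : Measure ℝ := κ.withDensity fun u => ENNReal.ofReal (g u - f u) with hβ
  have hfg : Integrable (fun u => f u - g u) κ := hf.sub hg
  have hgf : Integrable (fun u => g u - f u) κ := hg.sub hf
  have : IsFiniteMeasure α := isFiniteMeasure_withDensity_ofReal hfg.2
  have : IsFiniteMeasure β := isFiniteMeasure_withDensity_ofReal hgf.2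
  have hαr : ∀ A, MeasurableSet A → α.real A = ∫ u in A, max (f u - g u) 0 ∂κ :=
    fun A hA => real_withDensity_ofReal hfg hA
  have hβr : ∀ A, MeasurableSet A → β.real A = ∫ u in A, max (g u - f u) 0 ∂κ :=
    fun A hA => real_withDensity_ofReal hgf hA
  have hsplit : ∀ A, MeasurableSet A →
      ∫ u in A, g u ∂κ + α.real A - β.real A = ∫ u in A, f u ∂κ := by
    intro A hA
    rw [hαr A hA, hβr A hA,
      ← integral_add hg.integrableOn hfg.pos_part.integrableOn,
      ← integral_sub (by exact hg.integrableOn.add hfg.pos_part.integrableOn)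
        hgf.pos_part.integrableOn]
    refine integral_congr_ae (Filter.Eventually.of_forall fun u => ?_)
    dsimp only
    rcases le_total (f u) (g u) with h | h
    · rw [max_eq_right (by linarith), max_eq_left (by linarith)]; ring
    · rw [max_eq_left (by linarith), max_eq_right (by linarith)]; ring
  obtain ⟨γ, hγ1, hγ2, hγle⟩ := exists_ordered_coupling α β
    (fun u => by linarith [hsplit (Iic u) measurableSet_Iic, hint u])
    (by
      have := hsplit univ MeasurableSet.univ
      rw [setIntegral_univ, setIntegral_univ] at this
      linarith)
  have hγfin : IsFiniteMeasure γ := by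
    constructor
    have : γ univ = β univ := by
      rw [← hγ2, Measure.map_apply measurable_snd MeasurableSet.univ, preimage_univ]
    rw [this]; exact measure_lt_top _ _
  -- almost everywhere facts transferred from the marginals
  have hαae : ∀ᵐ u ∂α, u ∈ s ∧ g u < f u := by
    refine (ae_withDensity_iff (by fun_prop)).2 ?_
    filter_upwards [hs] with u hu hne
    refine ⟨hu, ?_⟩
    by_contra hcon
    exact hne (ENNReal.ofReal_eq_zero.2 (by linarith))
  have hβae : ∀ᵐ u ∂β, u ∈ s ∧ f u < g u := by
    refine (ae_withDensity_iff (by fun_prop)).2 ?_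
    filter_upwards [hs] with u hu hne
    refine ⟨hu, ?_⟩
    by_contra hcon
    exact hne (ENNReal.ofReal_eq_zero.2 (by linarith))
  have h1 : ∀ᵐ p ∂γ, p.1 ∈ s ∧ g p.1 < f p.1 :=
    ae_of_ae_map measurable_fst.aemeasurable (ae_mono hγ1 hαae)
  have h2 : ∀ᵐ p ∂γ, p.2 ∈ s ∧ f p.2 < g p.2 :=
    ae_of_ae_map measurable_snd.aemeasurable (by rw [hγ2]; exact hβae)
  have hord : ∀ᵐ p ∂γ, g p.1 < f p.1 ∧ f p.1 ≤ f p.2 ∧ f p.2 < g p.2 := by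
    filter_upwards [h1, h2, hγle] with p hp1 hp2 hp
    exact ⟨hp1.2, hmono hp1.1 hp2.1 hp, hp2.2⟩
  set w : ℝ × ℝ → ℝ≥0∞ := fun p => ENNReal.ofReal (g p.2 - g p.1)⁻¹ with hw
  have hwm : Measurable w := by fun_prop
  set γ' := γ.withDensity w with hγw
  -- the swapped mass is dominated by the available mass
  have hρ1 : γ'.map Prod.fst ≤ κ.restrict {u | g u < f u} := by
    refine Measure.le_iff.2 fun S hS => ?_
    have hmeas : MeasurableSet (Prod.fst ⁻¹' S : Set (ℝ × ℝ)) := measurable_fst hS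
    rw [Measure.map_apply measurable_fst hS, hγw, withDensity_apply _ hmeas]
    calc ∫⁻ p in Prod.fst ⁻¹' S, w p ∂γ
        ≤ ∫⁻ p in Prod.fst ⁻¹' S, ENNReal.ofReal (f p.1 - g p.1)⁻¹ ∂γ := by
          refine lintegral_mono_ae ((ae_restrict_of_ae hord).mono fun p hp => ?_)
          refine ENNReal.ofReal_le_ofReal (inv_anti₀ ?_ ?_) <;> linarith [hp.1, hp.2.1, hp.2.2]
      _ = ∫⁻ u in S, ENNReal.ofReal (f u - g u)⁻¹ ∂(γ.map Prod.fst) := by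
          rw [setLIntegral_map hS (by fun_prop) measurable_fst]
      _ ≤ ∫⁻ u in S, ENNReal.ofReal (f u - g u)⁻¹ ∂α :=
          lintegral_mono' (Measure.restrict_mono le_rfl hγ1) le_rfl
      _ = ∫⁻ u in S, ENNReal.ofReal (f u - g u) * ENNReal.ofReal (f u - g u)⁻¹ ∂κ := by
          rw [hα, setLIntegral_withDensity_eq_setLIntegral_mul _ (by fun_prop) (by fun_prop) hS]
          rfl
      _ ≤ ∫⁻ u in S, ({u | g u < f u}).indicator 1 u ∂κ := by
          refine lintegral_mono fun u => ?_
          by_cases hu : g u < f u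
          · rw [indicator_of_mem (by exact hu), ← ENNReal.ofReal_mul (by linarith),
              mul_inv_cancel₀ (by linarith)]
            simp
          · rw [ENNReal.ofReal_eq_zero.2 (by linarith)]; simp
      _ = _ := by
          rw [lintegral_indicator_one (measurableSet_lt hgm hfm), Measure.restrict_apply
            (measurableSet_lt hgm hfm), Measure.restrict_apply hS, inter_comm]
  have hρ2 : γ'.map Prod.snd ≤ κ.restrict {u | f u < g u} := by
    refine Measure.le_iff.2 fun S hS => ?_
    have hmeas : MeasurableSet (Prod.snd ⁻¹' S : Set (ℝ × ℝ)) := measurable_snd hS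
    rw [Measure.map_apply measurable_snd hS, hγw, withDensity_apply _ hmeas]
    calc ∫⁻ p in Prod.snd ⁻¹' S, w p ∂γ
        ≤ ∫⁻ p in Prod.snd ⁻¹' S, ENNReal.ofReal (g p.2 - f p.2)⁻¹ ∂γ := by
          refine lintegral_mono_ae ((ae_restrict_of_ae hord).mono fun p hp => ?_)
          refine ENNReal.ofReal_le_ofReal (inv_anti₀ ?_ ?_) <;> linarith [hp.1, hp.2.1, hp.2.2]
      _ = ∫⁻ u in S, ENNReal.ofReal (g u - f u)⁻¹ ∂(γ.map Prod.snd) := by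
          rw [setLIntegral_map hS (by fun_prop) measurable_snd]
      _ = ∫⁻ u in S, ENNReal.ofReal (g u - f u) * ENNReal.ofReal (g u - f u)⁻¹ ∂κ := by
          rw [hγ2, hβ, setLIntegral_withDensity_eq_setLIntegral_mul _ (by fun_prop)
            (by fun_prop) hS]
          rfl
      _ ≤ ∫⁻ u in S, ({u | f u < g u}).indicator 1 u ∂κ := by
          refine lintegral_mono fun u => ?_
          by_cases hu : f u < g u
          · rw [indicator_of_mem (by exact hu), ← ENNReal.ofReal_mul (by linarith),
              mul_inv_cancel₀ (by linarith)]
            simp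
          · rw [ENNReal.ofReal_eq_zero.2 (by linarith)]; simp
      _ = _ := by
          rw [lintegral_indicator_one (measurableSet_lt hfm hgm), Measure.restrict_apply
            (measurableSet_lt hfm hgm), Measure.restrict_apply hS, inter_comm]
  have hρ : γ'.map Prod.fst + γ'.map Prod.snd ≤ κ := by
    refine (add_le_add hρ1 hρ2).trans ?_
    rw [← Measure.restrict_union ?_ (measurableSet_lt hfm hgm)]
    · exact Measure.restrict_le_self
    · exact disjoint_left.2 fun u (hu : g u < f u) (hu' : f u < g u) => lt_asymm hu hu'
  have hρfin : IsFiniteMeasure (γ'.map Prod.fst + γ'.map Prod.snd) :=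
    isFiniteMeasure_of_le κ hρ
  set σ := κ - (γ'.map Prod.fst + γ'.map Prod.snd) with hσ
  have hσκ : σ + (γ'.map Prod.fst + γ'.map Prod.snd) = κ := Measure.sub_add_cancel_of_le hρ
  have hσle : σ ≤ κ := Measure.sub_le
  have hρ1κ : γ'.map Prod.fst ≤ κ := hρ1.trans Measure.restrict_le_self
  have hρ2κ : γ'.map Prod.snd ≤ κ := hρ2.trans Measure.restrict_le_self
  -- integrability with respect to the swapped mass
  have i1 : ∀ h : ℝ → ℝ, Integrable h κ → Integrable (fun p : ℝ × ℝ => h p.1) γ' := fun h hh =>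
    (hh.mono_measure hρ1κ).comp_measurable measurable_fst
  have i2 : ∀ h : ℝ → ℝ, Integrable h κ → Integrable (fun p : ℝ × ℝ => h p.2) γ' := fun h hh =>
    (hh.mono_measure hρ2κ).comp_measurable measurable_snd
  have hdrift : ∀ S : Set (ℝ × ℝ), MeasurableSet S →
      ∫ p in S, (g p.2 - g p.1) ∂γ' = γ.real S := by
    intro S hS
    rw [hγw, restrict_withDensity hS, integral_withDensity_eq_integral_toReal_smul hwm
      (Filter.Eventually.of_forall fun p => ENNReal.ofReal_lt_top)]
    have : ∫ p in S, (w p).toReal • (g p.2 - g p.1) ∂γ = ∫ p in S, (1 : ℝ) ∂γ := by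
      refine integral_congr_ae ((ae_restrict_of_ae hord).mono fun p hp => ?_)
      have hpos : 0 < g p.2 - g p.1 := by linarith [hp.1, hp.2.1, hp.2.2]
      simp only [hw, smul_eq_mul]
      rw [ENNReal.toReal_ofReal (inv_nonneg.2 hpos.le), inv_mul_cancel₀ hpos.ne']
    rw [this]
    simp
  have m0 : Measurable fun u => (f u, g u) := hfm.prodMk hgm
  have m1 : Measurable fun p : ℝ × ℝ => (f p.1, g p.2) := by fun_prop
  have m2 : Measurable fun p : ℝ × ℝ => (f p.2, g p.1) := by fun_prop
  set P := σ.map (fun u => (f u, g u)) + (γ'.map (fun p : ℝ × ℝ => (f p.1, g p.2)) +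
    γ'.map (fun p : ℝ × ℝ => (f p.2, g p.1))) with hP
  have hP1 : P.map Prod.fst = κ.map f := by
    conv_rhs => rw [← hσκ]
    rw [hP, Measure.map_add _ _ measurable_fst, Measure.map_add _ _ measurable_fst,
      Measure.map_add _ _ hfm, Measure.map_add _ _ hfm, Measure.map_map measurable_fst m0,
      Measure.map_map measurable_fst m1, Measure.map_map measurable_fst m2,
      Measure.map_map hfm measurable_fst, Measure.map_map hfm measurable_snd]
    rfl
  have hP2 : P.map Prod.snd = κ.map g := by
    conv_rhs => rw [← hσκ]
    rw [hP, Measure.map_add _ _ measurable_snd, Measure.map_add _ _ measurable_snd,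
      Measure.map_add _ _ hgm, Measure.map_add _ _ hgm, Measure.map_map measurable_snd m0,
      Measure.map_map measurable_snd m1, Measure.map_map measurable_snd m2,
      Measure.map_map hgm measurable_fst, Measure.map_map hgm measurable_snd,
      add_comm (γ'.map (g ∘ Prod.fst))]
    rfl
  refine ⟨P, ⟨hP1, hP2⟩, fun A hA => ?_⟩
  have hfA : MeasurableSet (f ⁻¹' A) := hfm hA
  have hS1 : MeasurableSet ((fun p : ℝ × ℝ => f p.1) ⁻¹' A) := measurable_fst hfA
  have hS2 : MeasurableSet ((fun p : ℝ × ℝ => f p.2) ⁻¹' A) := measurable_snd hfA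
  have hAm : MeasurableSet (Prod.fst ⁻¹' A : Set (ℝ × ℝ)) := measurable_fst hA
  have hI2 : Integrable (fun p : ℝ × ℝ => p.2) P := by
    have : Integrable (fun x : ℝ => x) (P.map Prod.snd) := by
      rw [hP2]
      exact (integrable_map_measure aestronglyMeasurable_id hgm.aemeasurable).2 hg
    exact this.comp_measurable measurable_snd
  rw [prod_univ]
  have e1 : ∫ p in Prod.fst ⁻¹' A, p.1 ∂P = ∫ u in f ⁻¹' A, f u ∂κ := by
    rw [← setIntegral_map (f := fun x : ℝ => x) hA aestronglyMeasurable_id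
      measurable_fst.aemeasurable, hP1,
      setIntegral_map (f := fun x : ℝ => x) hA aestronglyMeasurable_id hfm.aemeasurable]
  have e2 : ∫ p in Prod.fst ⁻¹' A, p.2 ∂P = ∫ u in f ⁻¹' A, g u ∂σ +
      (∫ p in (fun p : ℝ × ℝ => f p.1) ⁻¹' A, g p.2 ∂γ' +
        ∫ p in (fun p : ℝ × ℝ => f p.2) ⁻¹' A, g p.1 ∂γ') := by
    have hle0 : σ.map (fun u => (f u, g u)) ≤ P := Measure.le_add_right le_rfl
    have hle1 : γ'.map (fun p : ℝ × ℝ => (f p.1, g p.2)) ≤ P :=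
      Measure.le_add_left (Measure.le_add_right le_rfl)
    have hle2 : γ'.map (fun p : ℝ × ℝ => (f p.2, g p.1)) ≤ P :=
      Measure.le_add_left (Measure.le_add_left le_rfl)
    have j0 := (hI2.mono_measure hle0).integrableOn (s := Prod.fst ⁻¹' A)
    have j1 := (hI2.mono_measure hle1).integrableOn (s := Prod.fst ⁻¹' A)
    have j2 := (hI2.mono_measure hle2).integrableOn (s := Prod.fst ⁻¹' A)
    rw [hP, Measure.restrict_add, Measure.restrict_add, integral_add_measure j0
      (Integrable.add_measure j1 j2),
      integral_add_measure j1 j2,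
      setIntegral_map hAm measurable_snd.aestronglyMeasurable m0.aemeasurable,
      setIntegral_map hAm measurable_snd.aestronglyMeasurable m1.aemeasurable,
      setIntegral_map hAm measurable_snd.aestronglyMeasurable m2.aemeasurable]
    rfl
  have e3 : ∫ u in f ⁻¹' A, g u ∂κ = ∫ u in f ⁻¹' A, g u ∂σ +
      (∫ p in (fun p : ℝ × ℝ => f p.1) ⁻¹' A, g p.1 ∂γ' +
        ∫ p in (fun p : ℝ × ℝ => f p.2) ⁻¹' A, g p.2 ∂γ') := by
    have j0 := (hg.mono_measure hσle).integrableOn (s := f ⁻¹' A)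
    have j1 := (hg.mono_measure hρ1κ).integrableOn (s := f ⁻¹' A)
    have j2 := (hg.mono_measure hρ2κ).integrableOn (s := f ⁻¹' A)
    conv_lhs => rw [← hσκ]
    rw [Measure.restrict_add, Measure.restrict_add, integral_add_measure j0
      (Integrable.add_measure j1 j2),
      integral_add_measure j1 j2,
      setIntegral_map hfA hgm.aestronglyMeasurable measurable_fst.aemeasurable,
      setIntegral_map hfA hgm.aestronglyMeasurable measurable_snd.aemeasurable]
    rfl
  have d1 := hdrift _ hS1
  have d2 := hdrift _ hS2
  rw [integral_sub (i2 g hg).integrableOn (i1 g hg).integrableOn] at d1 d2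
  have b1 : γ.real ((fun p : ℝ × ℝ => f p.1) ⁻¹' A) ≤ α.real (f ⁻¹' A) := by
    rw [measureReal_def, measureReal_def]
    refine ENNReal.toReal_mono (measure_ne_top _ _) ?_
    have := Measure.le_iff.1 hγ1 _ hfA
    rwa [Measure.map_apply measurable_fst hfA] at this
  have b2 : γ.real ((fun p : ℝ × ℝ => f p.2) ⁻¹' A) = β.real (f ⁻¹' A) := by
    rw [measureReal_def, measureReal_def, ← hγ2, Measure.map_apply measurable_snd hfA]
    rfl
  have := hsplit _ hfA
  rw [e1, e2]
  linarith

lemma integrable_put_integrand {m : Measure ℝ} (hm : FiniteFirstMoment m) (t : ℝ) :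
    Integrable (fun s => max (t - s) 0) m := by
  have := hm.1
  exact ((integrable_const t).sub hm.2).pos_part

/-- Strassen's theorem on the line in supermartingale form, with the order expressed by put
functions. -/
theorem exists_supermartingaleCoupling (μ ν : Measure ℝ) (hμ : FiniteFirstMoment μ)
    (hν : FiniteFirstMoment ν) (hmass : μ univ = ν univ) (hput : ∀ t, put μ t ≤ put ν t)
    (hbary : ∫ x, x ∂ν ≤ ∫ x, x ∂μ) : ∃ P, IsSupermartingaleCoupling P μ ν := by
  have := hμ.1
  have := hν.1
  obtain ⟨f, hf⟩ := exists_quantile μ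
  obtain ⟨g, hg⟩ := exists_quantile ν
  have hmr : ν.real univ = μ.real univ := by rw [measureReal_def, measureReal_def, hmass]
  set κ : Measure ℝ := volume.restrict (Ioo 0 (μ.real univ)) with hκ
  have hfμ : κ.map f = μ := hf.map_eq
  have hgν : κ.map g = ν := by rw [hκ, ← hmr]; exact hg.map_eq
  have hgmono : MonotoneOn g (Ioo 0 (μ.real univ)) := hmr ▸ hg.monotoneOn
  have tr : ∀ (q : ℝ → ℝ) (m : Measure ℝ), Measurable q → κ.map q = m → ∀ φ : ℝ → ℝ,
      Measurable φ → Integrable φ m →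
      Integrable (fun u => φ (q u)) κ ∧ ∫ u, φ (q u) ∂κ = ∫ x, φ x ∂m := by
    rintro q m hq rfl φ hφ hφi
    exact ⟨hφi.comp_measurable hq,
      (integral_map hq.aemeasurable hφ.aestronglyMeasurable).symm⟩
  have hfi := tr f μ hf.1 hfμ _ measurable_id hμ.2
  have hgi := tr g ν hg.1 hgν _ measurable_id hν.2
  simp only [id] at hfi hgi
  have htot : ∫ x, g x ∂κ ≤ ∫ x, f x ∂κ := by rw [hfi.2, hgi.2]; exact hbary
  have hae : ∀ᵐ u ∂κ, u ∈ Ioo 0 (μ.real univ) := ae_restrict_mem measurableSet_Ioo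
  rw [← hfμ, ← hgν]
  refine exists_supermartingale_of_swap κ f g hf.1 hg.1 hfi.1 hgi.1 _ hae hf.monotoneOn ?_ htot
  intro u
  by_cases hu : u ∈ Ioo 0 (μ.real univ)
  · -- `t = g u` is the strike at which the Legendre transform of `put ν` at `u` is attained
    set t := g u with ht
    have hpm : Measurable fun x : ℝ => max (t - x) 0 := by fun_prop
    have pf := tr f μ hf.1 hfμ _ hpm (integrable_put_integrand hμ t)
    have pg := tr g ν hg.1 hgν _ hpm (integrable_put_integrand hν t)
    have k1 : ∫ s in Iic u, (t - g s) ∂κ = put ν t := by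
      rw [put, ← pg.2, ← integral_indicator measurableSet_Iic]
      refine integral_congr_ae (hae.mono fun s hs => ?_)
      rcases le_or_gt s u with hsu | hsu
      · simp only [indicator_of_mem (mem_Iic.2 hsu)]
        rw [max_eq_left (sub_nonneg.2 (hgmono hs hu hsu))]
      · dsimp only
        rw [indicator_of_notMem (by simpa using hsu),
          max_eq_right (sub_nonpos.2 (hgmono hu hs hsu.le))]
    have k2 : ∫ s in Iic u, (t - f s) ∂κ ≤ put μ t := by
      rw [put, ← pf.2]
      calc ∫ s in Iic u, (t - f s) ∂κ ≤ ∫ s in Iic u, max (t - f s) 0 ∂κ :=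
            setIntegral_mono ((integrable_const t).sub hfi.1).integrableOn pf.1.integrableOn
              fun s => le_max_left _ _
        _ ≤ _ := setIntegral_le_integral pf.1
              (Filter.Eventually.of_forall fun s => le_max_right _ _)
    rw [integral_sub (integrable_const t) hgi.1.integrableOn] at k1
    rw [integral_sub (integrable_const t) hfi.1.integrableOn] at k2
    linarith [hput t]
  · rw [mem_Ioo, not_and_or, not_lt, not_lt] at hu
    rcases hu with hu | hu
    · have : κ.restrict (Iic u) = 0 := by
        rw [Measure.restrict_eq_zero, hκ, Measure.restrict_apply measurableSet_Iic]
        have : Iic u ∩ Ioo 0 (μ.real univ) = ∅ := by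
          refine eq_empty_of_forall_notMem fun s hs => ?_
          linarith [mem_Iic.1 hs.1, hs.2.1]
        rw [this, measure_empty]
      rw [this]; simp
    · have : κ.restrict (Iic u) = κ := by
        refine Measure.restrict_eq_self_of_ae_mem (hae.mono fun s hs => ?_)
        exact (hs.2.trans_le hu).le
      rw [this]; exact htot

/-! ### The put gap near the left end of the domain -/

lemma put_nonneg (m : Measure ℝ) (t : ℝ) : 0 ≤ put m t :=
  integral_nonneg fun _ => le_max_right _ _

lemma put_mono {m : Measure ℝ} (hm : FiniteFirstMoment m) : Monotone (put m) := fun a b hab =>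
  integral_mono (integrable_put_integrand hm a) (integrable_put_integrand hm b)
    fun s => max_le_max (by linarith) le_rfl

lemma put_mono_measure {m m' : Measure ℝ} (hm : FiniteFirstMoment m') (h : m ≤ m') (t : ℝ) :
    put m t ≤ put m' t :=
  integral_mono_measure h (Filter.Eventually.of_forall fun _ => le_max_right _ _)
    (integrable_put_integrand hm t)

lemma continuous_put {m : Measure ℝ} (hm : FiniteFirstMoment m) : Continuous (put m) := by
  have := hm.1
  have hL : LipschitzWith (Real.toNNReal (m.real univ)) (put m) := by
    refine LipschitzWith.of_dist_le_mul fun a b => ?_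
    rw [Real.coe_toNNReal _ measureReal_nonneg, Real.dist_eq, put, put,
      ← integral_sub (integrable_put_integrand hm a) (integrable_put_integrand hm b)]
    have := norm_integral_le_of_norm_le_const (μ := m)
      (f := fun s => max (a - s) 0 - max (b - s) 0) (C := dist a b)
      (Filter.Eventually.of_forall fun s => by
        rw [Real.norm_eq_abs, Real.dist_eq]
        refine (abs_max_sub_max_le_abs _ _ _).trans (le_of_eq ?_)
        congr 1; ring)
    rw [Real.norm_eq_abs] at this
    linarith [mul_comm (dist a b) (m.real univ)]
  exact hL.continuous

lemma FiniteFirstMoment.of_le {m m' : Measure ℝ} (hm : FiniteFirstMoment m') (h : m ≤ m') :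
    FiniteFirstMoment m := by
  have := hm.1
  exact ⟨isFiniteMeasure_of_le m' h, hm.2.mono_measure h⟩

/-- The part of `put ν` carried by a compact part of the domain `I = {put μ < put ν}` and by the
complement of `I` is controlled by `put ν - put μ` to the left of any point of `I`. The delicate
region is a right neighbourhood of the left endpoint `l` of `I`: there both sides are comparable
to `ν {l} * (t - l)`, because `μ` has no mass at `l`. -/
lemma put_restrict_le (μ ν : Measure ℝ) (hμ : FiniteFirstMoment μ) (hν : FiniteFirstMoment ν)
    (hput : ∀ t, put μ t ≤ put ν t) (hconn : OrdConnected {t : ℝ | put μ t < put ν t})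
    (hfull : μ {t : ℝ | put μ t < put ν t}ᶜ = 0) (a b : ℝ) (ha : put μ a < put ν a)
    (hb : put μ b < put ν b) (Z : Set ℝ) (hZm : MeasurableSet Z)
    (hZ : Z ⊆ Icc a b ∪ {t : ℝ | put μ t < put ν t}ᶜ) :
    ∃ C : ℝ, 0 ≤ C ∧ ∀ t ≤ b, put (ν.restrict Z) t ≤ C * (put ν t - put μ t) := by
  have := hμ.1
  have := hν.1
  set I := {t : ℝ | put μ t < put ν t} with hI
  have hIopen : IsOpen I := isOpen_lt (continuous_put hμ) (continuous_put hν)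
  have hνZ : FiniteFirstMoment (ν.restrict Z) := hν.of_le Measure.restrict_le_self
  have hcpt : ∀ c ∈ I, ∃ C : ℝ, 0 ≤ C ∧ ∀ t, c ≤ t → t ≤ b →
      put (ν.restrict Z) t ≤ C * (put ν t - put μ t) := by
    intro c hc
    rcases le_or_gt c b with hcb | hcb
    · obtain ⟨x, hx, hxmin⟩ := isCompact_Icc.exists_isMinOn (nonempty_Icc.2 hcb)
        ((continuous_put hν).sub (continuous_put hμ)).continuousOn
      have hxI : put μ x < put ν x := hconn.out hc hb hx
      have hd : 0 < put ν x - put μ x := sub_pos.2 hxI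
      refine ⟨put ν b / (put ν x - put μ x), div_nonneg (put_nonneg _ _) hd.le,
        fun t h1 h2 => ?_⟩
      have hmin : put ν x - put μ x ≤ put ν t - put μ t := hxmin (mem_Icc.2 ⟨h1, h2⟩)
      calc put (ν.restrict Z) t ≤ put ν t := put_mono_measure hν Measure.restrict_le_self t
        _ ≤ put ν b := put_mono hν h2
        _ = put ν b / (put ν x - put μ x) * (put ν x - put μ x) := by field_simp
        _ ≤ _ := mul_le_mul_of_nonneg_left hmin (div_nonneg (put_nonneg _ _) hd.le)
    · exact ⟨0, le_rfl, fun t h1 h2 => by linarith⟩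
  by_cases hE : (Iᶜ ∩ Iio a).Nonempty
  swap
  · obtain ⟨C, hC0, hC⟩ := hcpt a ha
    refine ⟨C, hC0, fun t htb => ?_⟩
    rcases le_or_gt a t with hat | hat
    · exact hC t hat htb
    · have h0 : put (ν.restrict Z) t = 0 := by
        rw [put]
        refine integral_eq_zero_of_ae ((ae_restrict_iff' hZm).2
          (Filter.Eventually.of_forall fun s hs => ?_))
        refine max_eq_right (sub_nonpos.2 ?_)
        rcases hZ hs with h | h
        · exact hat.le.trans h.1
        · by_contra hlt
          exact hE ⟨s, h, (not_le.1 hlt).trans hat⟩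
      rw [h0]
      exact mul_nonneg hC0 (sub_nonneg.2 (hput t))
  -- `l` is the left endpoint of `I`
  set l := sSup (Iᶜ ∩ Iio a) with hl
  have hbdd : BddAbove (Iᶜ ∩ Iio a) := ⟨a, fun s hs => (mem_Iio.1 hs.2).le⟩
  have hlI : l ∉ I := by
    have h1 : l ∈ closure (Iᶜ ∩ Iio a) := csSup_mem_closure hE hbdd
    have h2 : closure (Iᶜ ∩ Iio a) ⊆ Iᶜ :=
      closure_minimal inter_subset_left hIopen.isClosed_compl
    exact h2 h1
  have hla : l < a := lt_of_le_of_ne (csSup_le hE fun s hs => (mem_Iio.1 hs.2).le)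
    fun h => hlI (h ▸ ha)
  have hIoc : ∀ t, l < t → t ≤ a → t ∈ I := by
    intro t h1 h2
    rcases h2.lt_or_eq with h2 | h2
    · by_contra hcon
      exact absurd (le_csSup hbdd ⟨hcon, h2⟩) (not_le.2 h1)
    · exact h2 ▸ ha
  have hIl : ∀ s ∈ I, l < s := by
    intro s hs
    by_contra hcon
    exact hlI (hconn.out hs ha ⟨not_lt.1 hcon, hla.le⟩)
  have hμl : ∀ᵐ s ∂μ, l < s := by
    have h1 : ∀ᵐ s ∂μ, s ∈ I := by
      rw [ae_iff]; exact hfull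
    exact h1.mono hIl
  have hputνl : put ν l = 0 := by
    have h1 : put μ l = 0 := by
      rw [put]
      exact integral_eq_zero_of_ae (hμl.mono fun s hs => max_eq_right (by linarith))
    have h2 : ¬ put μ l < put ν l := hlI
    linarith [put_nonneg ν l]
  have hνl : ∀ᵐ s ∂ν, l ≤ s := by
    have h1 := (integral_eq_zero_iff_of_nonneg (fun s => le_max_right (l - s) 0)
      (integrable_put_integrand hν l)).1 hputνl
    refine h1.mono fun s hs => ?_
    have h2 : max (l - s) 0 = 0 := hs
    linarith [le_max_left (l - s) 0]
  set k := ν.real {l} with hk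
  have hk0 : 0 ≤ k := measureReal_nonneg
  -- left of `a`, only the atom at `l` contributes to the restricted put
  have hputZ : ∀ t, t ≤ a → put (ν.restrict Z) t ≤ k * max (t - l) 0 := by
    intro t hta
    have h1 : put (ν.restrict Z) t ≤ ∫ s in {l}, max (t - s) 0 ∂ν := by
      rw [put, ← integral_indicator hZm, ← integral_indicator (measurableSet_singleton l)]
      refine integral_mono_ae ((integrable_put_integrand hν t).indicator hZm)
        ((integrable_put_integrand hν t).indicator (measurableSet_singleton l))
        (hνl.mono fun s hs => ?_)
      by_cases hsl : s = l
      · subst hsl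
        rw [indicator_of_mem (mem_singleton _)]
        exact indicator_le_self' (fun _ _ => le_max_right _ _) _
      · rw [indicator_of_notMem (s := {l}) hsl]
        by_cases hsZ : s ∈ Z
        · rw [indicator_of_mem hsZ]
          refine (max_eq_right ?_).le
          have hls : l < s := lt_of_le_of_ne hs (Ne.symm hsl)
          rcases hZ hsZ with h | h
          · linarith [h.1]
          · by_contra hcon
            exact h (hIoc s hls (by linarith))
        · rw [indicator_of_notMem hsZ]
    rw [integral_singleton, smul_eq_mul] at h1
    exact h1
  rcases hk0.eq_or_lt with hk0' | hkpos
  · obtain ⟨C, hC0, hC⟩ := hcpt a ha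
    refine ⟨C, hC0, fun t htb => ?_⟩
    rcases le_or_gt a t with hat | hat
    · exact hC t hat htb
    · have := hputZ t hat.le
      rw [← hk0', zero_mul] at this
      exact this.trans (mul_nonneg hC0 (sub_nonneg.2 (hput t)))
  -- close to `l` the mass of `μ` is at most half of the atom of `ν`
  obtain ⟨c, hlc, hca, hc⟩ : ∃ c, l < c ∧ c ≤ a ∧ μ.real (Ioo l c) ≤ k / 2 := by
    have h1 : Filter.Tendsto (fun n : ℕ => μ (Ioo l (l + 1 / ((n : ℝ) + 1)))) Filter.atTop
        (nhds (μ (⋂ n : ℕ, Ioo l (l + 1 / ((n : ℝ) + 1))))) := by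
      apply tendsto_measure_iInter_atTop
      · intro n; exact measurableSet_Ioo.nullMeasurableSet
      · intro i j hij
        apply Ioo_subset_Ioo_right
        gcongr
      · exact ⟨0, measure_ne_top _ _⟩
    have hlim := tendsto_one_div_add_atTop_nhds_zero_nat (𝕜 := ℝ)
    have h2 : (⋂ n : ℕ, Ioo l (l + 1 / ((n : ℝ) + 1))) = ∅ := by
      refine eq_empty_of_forall_notMem fun y hy => ?_
      rw [mem_iInter] at hy
      have h3 := (tendsto_const_nhds (x := l)).add hlim
      rw [add_zero] at h3
      exact absurd (ge_of_tendsto' h3 fun n => (hy n).2.le) (not_le.2 (hy 0).1)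
    rw [h2, measure_empty] at h1
    have h4 := (ENNReal.tendsto_toReal (a := 0) (by simp)).comp h1
    have h5 := h4.eventually (gt_mem_nhds (show (ENNReal.toReal 0) < k / 2 by simpa using hkpos))
    have h6 := hlim.eventually (gt_mem_nhds (sub_pos.2 hla))
    obtain ⟨n, hn1, hn2⟩ := (h5.and h6).exists
    refine ⟨l + 1 / ((n : ℝ) + 1), ?_, by linarith, hn1.le⟩
    have : (0 : ℝ) < 1 / ((n : ℝ) + 1) := by positivity
    linarith
  have hnear : ∀ t, t ≤ c → put (ν.restrict Z) t ≤ 2 * (put ν t - put μ t) := by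
    intro t htc
    refine (hputZ t (htc.trans hca)).trans ?_
    rcases le_or_gt t l with htl | htl
    · rw [max_eq_right (by linarith), mul_zero]
      linarith [hput t]
    rw [max_eq_left (by linarith)]
    have h1 : k * (t - l) ≤ put ν t := by
      have h2 : ∫ s in {l}, max (t - s) 0 ∂ν ≤ put ν t :=
        setIntegral_le_integral (integrable_put_integrand hν t)
          (Filter.Eventually.of_forall fun s => le_max_right _ _)
      rwa [integral_singleton, smul_eq_mul, max_eq_left (by linarith)] at h2
    have h3 : put μ t ≤ k / 2 * (t - l) := by
      have h4 : put μ t ≤ ∫ s in Ioo l c, (t - l) ∂μ := by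
        rw [put, ← integral_indicator measurableSet_Ioo]
        refine integral_mono_ae (integrable_put_integrand hμ t)
          ((integrable_const (t - l)).indicator measurableSet_Ioo) (hμl.mono fun s hs => ?_)
        by_cases hsc : s < c
        · rw [indicator_of_mem (mem_Ioo.2 ⟨hs, hsc⟩)]
          exact max_le (by linarith) (by linarith)
        · rw [indicator_of_notMem (fun h => hsc h.2)]
          exact (max_eq_right (by linarith)).le
      rw [setIntegral_const, smul_eq_mul] at h4
      exact h4.trans (mul_le_mul_of_nonneg_right hc (by linarith))
    nlinarith
  obtain ⟨C, hC0, hC⟩ := hcpt c (hIoc c hlc hca)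
  refine ⟨max C 2, le_max_of_le_left hC0, fun t htb => ?_⟩
  rcases le_or_gt c t with hct | hct
  · exact (hC t hct htb).trans
      (mul_le_mul_of_nonneg_right (le_max_left _ _) (sub_nonneg.2 (hput t)))
  · exact (hnear t hct.le).trans
      (mul_le_mul_of_nonneg_right (le_max_right _ _) (sub_nonneg.2 (hput t)))

/-! ### Removing a dominated supermartingale coupling -/

lemma put_add {m m' : Measure ℝ} (hm : FiniteFirstMoment m) (hm' : FiniteFirstMoment m') (t : ℝ) :
    put (m + m') t = put m t + put m' t :=
  integral_add_measure (integrable_put_integrand hm t) (integrable_put_integrand hm' t)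

lemma put_smul (m : Measure ℝ) (c : NNReal) (t : ℝ) : put (c • m) t = c * put m t := by
  rw [put, integral_smul_nnreal_measure]; rfl

lemma FiniteFirstMoment.smul {m : Measure ℝ} (hm : FiniteFirstMoment m) (c : NNReal) :
    FiniteFirstMoment (c • m) := by
  have := hm.1
  exact ⟨inferInstance, hm.2.smul_measure_nnreal⟩

lemma FiniteFirstMoment.add {m m' : Measure ℝ} (hm : FiniteFirstMoment m)
    (hm' : FiniteFirstMoment m') : FiniteFirstMoment (m + m') := by
  have := hm.1
  have := hm'.1
  exact ⟨inferInstance, hm.2.add_measure hm'.2⟩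

lemma integrable_fst_of_map {P : Measure (ℝ × ℝ)} (h : FiniteFirstMoment (P.map Prod.fst)) :
    Integrable (fun p : ℝ × ℝ => p.1) P :=
  (integrable_map_measure (f := Prod.fst) (g := fun x : ℝ => x)
    (by fun_prop) (by fun_prop)).1 h.2

lemma integrable_snd_of_map {P : Measure (ℝ × ℝ)} (h : FiniteFirstMoment (P.map Prod.snd)) :
    Integrable (fun p : ℝ × ℝ => p.2) P :=
  (integrable_map_measure (f := Prod.snd) (g := fun x : ℝ => x)
    (by fun_prop) (by fun_prop)).1 h.2

lemma IsSupermartingaleCoupling.add {P P' : Measure (ℝ × ℝ)} {m n m' n' : Measure ℝ}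
    (h : IsSupermartingaleCoupling P m n) (h' : IsSupermartingaleCoupling P' m' n')
    (hm : FiniteFirstMoment m) (hn : FiniteFirstMoment n)
    (hm' : FiniteFirstMoment m') (hn' : FiniteFirstMoment n') :
    IsSupermartingaleCoupling (P + P') (m + m') (n + n') := by
  obtain ⟨⟨h1, h2⟩, h3⟩ := h
  obtain ⟨⟨h1', h2'⟩, h3'⟩ := h'
  refine ⟨⟨?_, ?_⟩, fun A hA => ?_⟩
  · rw [Measure.map_add _ _ measurable_fst, h1, h1']
  · rw [Measure.map_add _ _ measurable_snd, h2, h2']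
  · rw [Measure.restrict_add,
      integral_add_measure (integrable_snd_of_map (by rwa [h2])).integrableOn
        (integrable_snd_of_map (by rwa [h2'])).integrableOn,
      integral_add_measure (integrable_fst_of_map (by rwa [h1])).integrableOn
        (integrable_fst_of_map (by rwa [h1'])).integrableOn]
    exact add_le_add (h3 A hA) (h3' A hA)

lemma IsSupermartingaleCoupling.smul {P : Measure (ℝ × ℝ)} {m n : Measure ℝ}
    (h : IsSupermartingaleCoupling P m n) (c : NNReal) :
    IsSupermartingaleCoupling (c • P) (c • m) (c • n) := by
  obtain ⟨⟨h1, h2⟩, h3⟩ := h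
  refine ⟨⟨?_, ?_⟩, fun A hA => ?_⟩
  · rw [Measure.map_smul, h1]
  · rw [Measure.map_smul, h2]
  · rw [Measure.restrict_smul, integral_smul_nnreal_measure, integral_smul_nnreal_measure]
    exact mul_le_mul_of_nonneg_left (h3 A hA) c.2

lemma exists_add_eq_of_le {m m' : Measure ℝ} [IsFiniteMeasure m] (h : m ≤ m') :
    ∃ r, r + m = m' := ⟨m' - m, Measure.sub_add_cancel_of_le h⟩

/-- A supermartingale coupling `Q` whose marginals, put gap and barycentre gap are dominated by
multiples of those of `(μ, ν)` is, up to scaling, part of some element of `S(μ, ν)`: after removing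
a small multiple of `Q` the remaining marginals still satisfy the hypotheses of Strassen's
theorem. -/
lemma exists_supermartingaleCoupling_ge (μ ν m n : Measure ℝ) (hμ : FiniteFirstMoment μ)
    (hν : FiniteFirstMoment ν) (hmass : μ univ = ν univ) (Q : Measure (ℝ × ℝ))
    (hQ : IsSupermartingaleCoupling Q m n) (c : NNReal)
    (hm : c • m ≤ μ) (hn : c • n ≤ ν)
    (hput : ∀ t, c * (put n t - put m t) ≤ put ν t - put μ t)
    (hbary : c * (∫ x, x ∂m - ∫ x, x ∂n) ≤ ∫ x, x ∂μ - ∫ x, x ∂ν) :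
    ∃ P, IsSupermartingaleCoupling P μ ν ∧ c • Q ≤ P := by
  have hm1 := hμ.of_le hm
  have hn1 := hν.of_le hn
  have := hm1.1
  have := hn1.1
  have := hμ.1
  obtain ⟨μ', hμ'⟩ := exists_add_eq_of_le hm
  obtain ⟨ν', hν'⟩ := exists_add_eq_of_le hn
  have hμ'1 : FiniteFirstMoment μ' := hμ.of_le (hμ' ▸ Measure.le_add_right le_rfl)
  have hν'1 : FiniteFirstMoment ν' := hν.of_le (hν' ▸ Measure.le_add_right le_rfl)
  have hmn : m univ = n univ := by
    rw [← hQ.1.1, ← hQ.1.2, Measure.map_apply measurable_fst .univ,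
      Measure.map_apply measurable_snd .univ]
    rfl
  obtain ⟨P', hP'⟩ := exists_supermartingaleCoupling μ' ν' hμ'1 hν'1
    (by
      rw [← hμ', ← hν', Measure.add_apply, Measure.add_apply, Measure.smul_apply,
        Measure.smul_apply, hmn] at hmass
      refine (ENNReal.add_left_inj ?_).1 hmass
      have := measure_ne_top (c • n) univ
      rwa [Measure.smul_apply] at this)
    (by
      intro t
      have h := hput t
      rw [← hμ', ← hν', put_add hμ'1 hm1, put_add hν'1 hn1, put_smul, put_smul] at h
      linarith)
    (by
      have h := hbary
      rw [← hμ', ← hν', integral_add_measure hμ'1.2 hm1.2, integral_add_measure hν'1.2 hn1.2,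
        integral_smul_nnreal_measure, integral_smul_nnreal_measure, NNReal.smul_def,
        NNReal.smul_def, smul_eq_mul, smul_eq_mul] at h
      linarith)
  refine ⟨P' + c • Q, ?_, Measure.le_add_left le_rfl⟩
  rw [← hμ', ← hν']
  exact hP'.add (hQ.smul c) hμ'1 hν'1 hm1 hn1

/-! ### Compensation of the drift -/

/-- Compensation by a product measure. If `s * ∫_Z (x - z) dν(z)` is bounded below by a positive
constant for `x` in the first marginal of `m`, then spreading over `Z` with intensity inversely
proportional to this integral produces any prescribed (bounded) drift density `f`. -/
lemma exists_compensation (m : Measure (ℝ × ℝ)) [IsFiniteMeasure m] (ν : Measure ℝ)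
    (hν : FiniteFirstMoment ν) (Z : Set ℝ) (f : ℝ × ℝ → ℝ) (hf : Measurable f) (M c s : ℝ)
    (hc : 0 < c) (hs : s * s = 1) (hf0 : ∀ p, 0 ≤ f p) (hfM : ∀ᵐ p ∂m, f p ≤ M)
    (hm1 : Integrable (fun p : ℝ × ℝ => p.1) m)
    (he : ∀ᵐ p ∂m, c ≤ s * ∫ z in Z, (p.1 - z) ∂ν) :
    ∃ κ : Measure (ℝ × ℝ), ∃ C : NNReal, κ.map Prod.fst ≤ C • m.map Prod.fst ∧
      κ.map Prod.snd ≤ C • ν.restrict Z ∧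
      ∀ A : Set ℝ, MeasurableSet A → ∫ p in A ×ˢ (univ : Set ℝ), (p.2 - p.1) ∂κ =
        -(s * ∫ p in A ×ˢ (univ : Set ℝ), f p ∂m) := by
  have := hν.1
  set e : ℝ → ℝ := fun x => ∫ z in Z, (x - z) ∂ν with he'
  have he2 : ∀ x, e x = x * (ν.restrict Z).real univ - ∫ z in Z, z ∂ν := by
    intro x
    rw [he']
    simp only
    rw [integral_sub (integrable_const x) hν.2.integrableOn, integral_const, smul_eq_mul, mul_comm]
  have hem : Measurable e := by
    rw [show e = _ from funext he2]; fun_prop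
  set g : ℝ × ℝ → ℝ := fun p => f p / (s * e p.1) with hg
  have hgm : Measurable g := by fun_prop
  have hg0 : ∀ᵐ p ∂m, 0 ≤ g p := he.mono fun p hp => div_nonneg (hf0 p) (hc.le.trans hp)
  have hgM : ∀ᵐ p ∂m, g p ≤ M / c := by
    filter_upwards [he, hfM] with p hp hp'
    exact div_le_div₀ ((hf0 p).trans hp') hp' hc hp
  set ρ2 := m.withDensity (fun p => ENNReal.ofReal (g p)) with hρ2
  have hρ2m : ρ2 ≤ (M / c).toNNReal • m := by
    refine Measure.le_iff.2 fun S hS => ?_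
    rw [hρ2, withDensity_apply _ hS]
    calc ∫⁻ p in S, ENNReal.ofReal (g p) ∂m
        ≤ ∫⁻ p in S, ENNReal.ofReal (M / c) ∂m :=
          lintegral_mono_ae ((ae_restrict_of_ae hgM).mono fun p hp => ENNReal.ofReal_le_ofReal hp)
      _ = _ := by rw [setLIntegral_const]; rfl
  set ρ := ρ2.map Prod.fst with hρ
  have hρm : ρ ≤ (M / c).toNNReal • m.map Prod.fst := by
    rw [← Measure.map_smul]
    exact Measure.map_mono hρ2m measurable_fst
  have : IsFiniteMeasure ρ2 := isFiniteMeasure_of_le _ hρ2m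
  have : IsFiniteMeasure ρ := by rw [hρ]; infer_instance
  have hρint : Integrable (fun x : ℝ => x) ρ := by
    refine Integrable.mono_measure ?_ hρm
    refine Integrable.smul_measure_nnreal ?_
    exact (integrable_map_measure (f := Prod.fst) (g := fun x : ℝ => x)
      (by fun_prop) (by fun_prop)).2 hm1
  refine ⟨ρ.prod (ν.restrict Z), max ((ν Z).toNNReal * (M / c).toNNReal) (ρ univ).toNNReal,
    ?_, ?_, fun A hA => ?_⟩
  · rw [Measure.map_fst_prod, Measure.restrict_apply_univ]
    calc ν Z • ρ = (ν Z).toNNReal • ρ := by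
          rw [← ENNReal.coe_toNNReal (measure_ne_top ν Z)]; rfl
      _ ≤ (ν Z).toNNReal • ((M / c).toNNReal • m.map Prod.fst) := by gcongr
      _ = ((ν Z).toNNReal * (M / c).toNNReal) • m.map Prod.fst := smul_smul _ _ _
      _ ≤ _ := by gcongr; exact le_max_left _ _
  · rw [Measure.map_snd_prod]
    calc ρ univ • ν.restrict Z = (ρ univ).toNNReal • ν.restrict Z := by
          rw [← ENNReal.coe_toNNReal (measure_ne_top ρ univ)]; rfl
      _ ≤ _ := by gcongr; exact le_max_right _ _
  · have h1 : ∫ p in A ×ˢ (univ : Set ℝ), (p.2 - p.1) ∂(ρ.prod (ν.restrict Z))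
        = - ∫ x in A, e x ∂ρ := by
      rw [← Measure.prod_restrict, Measure.restrict_univ, integral_prod]
      · rw [← integral_neg]
        refine integral_congr_ae (Filter.Eventually.of_forall fun x => ?_)
        simp only [he']
        rw [← integral_neg]
        simp
      · refine Integrable.sub ?_ ?_
        · exact Integrable.comp_snd (f := fun x : ℝ => x) hν.2.integrableOn _
        · exact Integrable.comp_fst (f := fun x : ℝ => x) hρint.integrableOn _
    rw [h1, hρ, setIntegral_map hA hem.aestronglyMeasurable measurable_fst.aemeasurable,
      show Prod.fst ⁻¹' A = A ×ˢ (univ : Set ℝ) by ext; simp, hρ2,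
      setIntegral_withDensity_eq_setIntegral_toReal_smul
        (by fun_prop) (Filter.Eventually.of_forall fun _ => ENNReal.ofReal_lt_top) _
        (hA.prod .univ), ← integral_const_mul]
    congr 1
    refine integral_congr_ae (ae_restrict_of_ae ?_)
    filter_upwards [he, hg0] with p hp hp'
    have h2 : s * e p.1 ≠ 0 := (hc.trans_le hp).ne'
    have h3 : e p.1 ≠ 0 := right_ne_zero_of_mul h2
    have h4 : s ≠ 0 := left_ne_zero_of_mul h2
    rw [ENNReal.toReal_ofReal hp', smul_eq_mul, hg]
    simp only
    field_simp
    linear_combination (-(f p)) * hs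

/-! ### Domination of the put gap -/

lemma integrable_call_integrand {m : Measure ℝ} (hm : FiniteFirstMoment m) (t : ℝ) :
    Integrable (fun s : ℝ => max (s - t) 0) m := by
  have := hm.1
  exact (hm.2.sub (integrable_const t)).sup (integrable_const 0)

lemma put_eq_call {m : Measure ℝ} (hm : FiniteFirstMoment m) (t : ℝ) :
    put m t = ∫ s, max (s - t) 0 ∂m + (t * m.real univ - ∫ s, s ∂m) := by
  have := hm.1
  have h1 : ∫ s, (t - s) ∂m = t * m.real univ - ∫ s, s ∂m := by
    rw [integral_sub (integrable_const t) hm.2, integral_const, smul_eq_mul, mul_comm]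
  rw [← h1, ← integral_add (integrable_call_integrand hm t)
    (by exact (integrable_const t).sub hm.2), put]
  refine integral_congr_ae (Filter.Eventually.of_forall fun s => ?_)
  simp only
  rcases le_total s t with h | h
  · rw [max_eq_left (by linarith), max_eq_right (by linarith)]; ring
  · rw [max_eq_right (by linarith), max_eq_left (by linarith)]; ring

lemma FiniteFirstMoment.map_neg {m : Measure ℝ} (hm : FiniteFirstMoment m) :
    FiniteFirstMoment (m.map fun x => -x) := by
  have := hm.1
  exact ⟨inferInstance, (integrable_map_measure (g := fun x : ℝ => x)
    (by fun_prop) (by fun_prop)).2 hm.2.neg⟩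

lemma put_map_neg (m : Measure ℝ) (t : ℝ) :
    put (m.map fun x => -x) t = ∫ s, max (s - -t) 0 ∂m := by
  rw [put, integral_map (by fun_prop) (by fun_prop)]
  refine integral_congr_ae (Filter.Eventually.of_forall fun s => ?_)
  simp only
  congr 1; ring

lemma call_mono_measure {m m' : Measure ℝ} (hm : FiniteFirstMoment m') (h : m ≤ m') (t : ℝ) :
    ∫ s, max (s - t) 0 ∂m ≤ ∫ s, max (s - t) 0 ∂m' :=
  integral_mono_measure h (Filter.Eventually.of_forall fun _ => le_max_right _ _)
    (integrable_call_integrand hm t)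

/-- Mirror image of `put_restrict_le` at the right endpoint, available when the barycentres
agree, since then the reflected pair has the reflected put gap. -/
lemma call_restrict_le (μ ν : Measure ℝ) (hμ : FiniteFirstMoment μ) (hν : FiniteFirstMoment ν)
    (hmass : μ univ = ν univ) (hbary : ∫ x, x ∂μ = ∫ x, x ∂ν)
    (hput : ∀ t, put μ t ≤ put ν t) (hconn : OrdConnected {t : ℝ | put μ t < put ν t})
    (hfull : μ {t : ℝ | put μ t < put ν t}ᶜ = 0) (a b : ℝ) (ha : put μ a < put ν a)
    (hb : put μ b < put ν b) (Z : Set ℝ) (hZm : MeasurableSet Z)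
    (hZ : Z ⊆ Icc a b ∪ {t : ℝ | put μ t < put ν t}ᶜ) :
    ∃ C : ℝ, 0 ≤ C ∧ ∀ t, a ≤ t →
      ∫ s in Z, max (s - t) 0 ∂ν ≤ C * (put ν t - put μ t) := by
  have hmass' : μ.real univ = ν.real univ := by rw [measureReal_def, hmass]; rfl
  have hgap : ∀ t, put (ν.map fun x => -x) t - put (μ.map fun x => -x) t
      = put ν (-t) - put μ (-t) := by
    intro t
    rw [put_map_neg, put_map_neg, put_eq_call hμ, put_eq_call hν, hmass', hbary]; ring
  have hlt : ∀ t, put (μ.map fun x => -x) t < put (ν.map fun x => -x) t ↔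
      put μ (-t) < put ν (-t) := by
    intro t
    rw [← sub_pos, hgap, sub_pos]
  have hIm : MeasurableSet {t : ℝ | put μ t < put ν t} :=
    (isOpen_lt (continuous_put hμ) (continuous_put hν)).measurableSet
  have hneg : Measurable fun x : ℝ => -x := measurable_neg
  obtain ⟨C, hC0, hC⟩ := put_restrict_le (μ.map fun x => -x) (ν.map fun x => -x)
    hμ.map_neg hν.map_neg
    (fun t => by have := hgap t; have := hput (-t); linarith)
    (by
      refine ⟨fun x hx y hy z hz => ?_⟩
      rw [mem_ofPred_eq, hlt] at hx hy ⊢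
      exact hconn.out hy hx ⟨neg_le_neg hz.2, neg_le_neg hz.1⟩)
    (by
      have : {t : ℝ | put (μ.map fun x => -x) t < put (ν.map fun x => -x) t}
          = (fun x => -x) ⁻¹' {t : ℝ | put μ t < put ν t} := by
        ext t; exact hlt t
      rw [this, Measure.map_apply hneg (hneg hIm).compl]
      convert hfull using 2
      ext t; simp)
    (-b) (-a) (by rw [hlt, neg_neg]; exact hb) (by rw [hlt, neg_neg]; exact ha)
    ((fun x => -x) ⁻¹' Z) (hneg hZm)
    (by
      intro z hz
      rcases hZ hz with h | h
      · exact Or.inl ⟨by linarith [h.2], by linarith [h.1]⟩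
      · refine Or.inr fun h' => h ?_
        exact (hlt z).1 h')
  refine ⟨C, hC0, fun t ht => ?_⟩
  have h1 := hC (-t) (by linarith)
  rw [hgap, neg_neg, Measure.restrict_map hneg (hneg hZm), put_map_neg, neg_neg] at h1
  convert h1 using 3
  ext z; simp

/-- When the barycentres differ, the put gap stays away from zero near `+∞`. -/
lemma exists_gap_lower_bound (μ ν : Measure ℝ) (hμ : FiniteFirstMoment μ)
    (hν : FiniteFirstMoment ν) (hmass : μ univ = ν univ) (hbary : ∫ x, x ∂ν < ∫ x, x ∂μ) :
    ∃ δ > 0, ∃ T : ℝ, ∀ t ≥ T, δ ≤ put ν t - put μ t := by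
  have hmass' : μ.real univ = ν.real univ := by rw [measureReal_def, hmass]; rfl
  have hlim : Filter.Tendsto (fun t : ℝ => ∫ s, max (s - t) 0 ∂μ) Filter.atTop (nhds 0) := by
    rw [show (nhds (0 : ℝ)) = nhds (∫ _ : ℝ, (0 : ℝ) ∂μ) by rw [integral_zero]]
    refine tendsto_integral_filter_of_dominated_convergence (fun s => |s|)
      (Filter.Eventually.of_forall fun t => (integrable_call_integrand hμ t).1) ?_ hμ.2.abs
      (Filter.Eventually.of_forall fun s => ?_)
    · filter_upwards [Filter.eventually_ge_atTop 0] with t ht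
      refine Filter.Eventually.of_forall fun s => ?_
      rw [Real.norm_eq_abs, abs_of_nonneg (le_max_right _ _)]
      exact max_le (by linarith [le_abs_self s]) (abs_nonneg s)
    · refine tendsto_const_nhds.congr' ?_
      filter_upwards [Filter.eventually_ge_atTop s] with t ht
      rw [max_eq_right (by linarith)]
  set β := ∫ x, x ∂μ - ∫ x, x ∂ν with hβ
  have hβ0 : 0 < β := sub_pos.2 hbary
  obtain ⟨T, hT⟩ := Filter.eventually_atTop.1
    (hlim.eventually (gt_mem_nhds (half_pos hβ0)))
  refine ⟨β / 2, half_pos hβ0, T, fun t ht => ?_⟩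
  have h1 := hT t ht
  have h2 : 0 ≤ ∫ s, max (s - t) 0 ∂ν := integral_nonneg fun _ => le_max_right _ _
  rw [put_eq_call hμ, put_eq_call hν, hmass']
  linarith

/-- Domination of the put gap of `(m, n)` by that of the irreducible pair `(μ, ν)`, when `n` is
dominated on a compact part of the domain together with its complement. -/
lemma exists_gap_domination (μ ν m n : Measure ℝ) (hμ : FiniteFirstMoment μ)
    (hν : FiniteFirstMoment ν) (hm : FiniteFirstMoment m) (hmass : μ univ = ν univ)
    (hmass' : m univ = n univ) (hbary : ∫ x, x ∂ν ≤ ∫ x, x ∂μ)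
    (hbary' : ∫ x, x ∂n ≤ ∫ x, x ∂m)
    (hbary_eq : ∫ x, x ∂ν = ∫ x, x ∂μ → ∫ x, x ∂n = ∫ x, x ∂m)
    (hput : ∀ t, put μ t ≤ put ν t) (hconn : OrdConnected {t : ℝ | put μ t < put ν t})
    (hfull : μ {t : ℝ | put μ t < put ν t}ᶜ = 0) (a b : ℝ) (hab : a ≤ b)
    (ha : put μ a < put ν a) (hb : put μ b < put ν b) (Z : Set ℝ) (hZm : MeasurableSet Z)
    (hZ : Z ⊆ Icc a b ∪ {t : ℝ | put μ t < put ν t}ᶜ) (K : NNReal)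
    (hn : n ≤ K • ν.restrict Z) :
    ∃ C : ℝ, 0 ≤ C ∧ (∀ t, put n t - put m t ≤ C * (put ν t - put μ t)) ∧
      ∫ x, x ∂m - ∫ x, x ∂n ≤ C * (∫ x, x ∂μ - ∫ x, x ∂ν) := by
  have hνZ : FiniteFirstMoment (ν.restrict Z) := hν.of_le Measure.restrict_le_self
  have hn1 : FiniteFirstMoment n := (hνZ.smul K).of_le hn
  have hmr : m.real univ = n.real univ := by rw [measureReal_def, hmass']; rfl
  have hputn : ∀ t, put n t ≤ K * put (ν.restrict Z) t := fun t => by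
    rw [← put_smul]; exact put_mono_measure (hνZ.smul K) hn t
  have hcalln : ∀ t, ∫ s, max (s - t) 0 ∂n ≤ K * ∫ s in Z, max (s - t) 0 ∂ν := fun t => by
    refine (call_mono_measure (hνZ.smul K) hn t).trans (le_of_eq ?_)
    rw [integral_smul_nnreal_measure]; rfl
  have hcall0 : ∀ t, 0 ≤ ∫ s, max (s - t) 0 ∂m := fun t =>
    integral_nonneg fun _ => le_max_right _ _
  rcases hbary.eq_or_lt with heq | hlt
  · obtain ⟨C1, hC1, h1⟩ := put_restrict_le μ ν hμ hν hput hconn hfull a b ha hb Z hZm hZ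
    obtain ⟨C2, hC2, h2⟩ := call_restrict_le μ ν hμ hν hmass heq.symm hput hconn hfull a b ha hb
      Z hZm hZ
    refine ⟨K * max C1 C2, mul_nonneg K.coe_nonneg (le_max_of_le_left hC1), fun t => ?_, ?_⟩
    · have hD : 0 ≤ put ν t - put μ t := sub_nonneg.2 (hput t)
      have hstep : ∀ C ≤ max C1 C2, K * (C * (put ν t - put μ t)) ≤
          K * max C1 C2 * (put ν t - put μ t) := fun C hC => by
        rw [mul_assoc]
        exact mul_le_mul_of_nonneg_left (mul_le_mul_of_nonneg_right hC hD) K.coe_nonneg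
      rcases le_total t b with htb | htb
      · have h3 := mul_le_mul_of_nonneg_left (h1 t htb) K.coe_nonneg
        have := hstep C1 (le_max_left _ _)
        linarith [hputn t, put_nonneg m t]
      · have h3 := mul_le_mul_of_nonneg_left (h2 t (hab.trans htb)) K.coe_nonneg
        have := hstep C2 (le_max_right _ _)
        rw [put_eq_call hm, put_eq_call hn1, hmr, hbary_eq heq]
        linarith [hcalln t, hcall0 t]
    · rw [hbary_eq heq, heq]; simp
  · obtain ⟨δ, hδ, T, hT⟩ := exists_gap_lower_bound μ ν hμ hν hmass hlt
    set T' := max T b with hT'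
    have hT'I : put μ T' < put ν T' := by linarith [hT T' (le_max_left _ _)]
    obtain ⟨C1, hC1, h1⟩ := put_restrict_le μ ν hμ hν hput hconn hfull a T' ha hT'I Z hZm
      (hZ.trans (union_subset_union_left _ (Icc_subset_Icc_right (le_max_right _ _))))
    set κ := ∫ s, max (s - T') 0 ∂n + (∫ x, x ∂m - ∫ x, x ∂n) with hκ
    have hκ0 : 0 ≤ κ :=
      add_nonneg (integral_nonneg fun _ => le_max_right _ _) (sub_nonneg.2 hbary')
    set C3 := (∫ x, x ∂m - ∫ x, x ∂n) / (∫ x, x ∂μ - ∫ x, x ∂ν) with hC3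
    refine ⟨max (max (K * C1) (κ / δ)) C3, ?_, fun t => ?_, ?_⟩
    · exact le_max_of_le_left (le_max_of_le_left (mul_nonneg K.coe_nonneg hC1))
    · have hD : 0 ≤ put ν t - put μ t := sub_nonneg.2 (hput t)
      rcases le_total t T' with htb | htb
      · have h3 := mul_le_mul_of_nonneg_left (h1 t htb) K.coe_nonneg
        have h4 := mul_le_mul_of_nonneg_right (((le_max_left (K * C1) (κ / δ))).trans
          (le_max_left _ C3)) hD
        linarith [hputn t, put_nonneg m t]
      · have h5 : δ ≤ put ν t - put μ t := hT t ((le_max_left _ _).trans htb)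
        have h4 := mul_le_mul_of_nonneg_right (((le_max_right (K * C1) (κ / δ))).trans
          (le_max_left _ C3)) hD
        have h6 : κ ≤ κ / δ * (put ν t - put μ t) :=
          calc κ = κ / δ * δ := by field_simp
            _ ≤ _ := mul_le_mul_of_nonneg_left h5 (div_nonneg hκ0 hδ.le)
        have h7 : ∫ s, max (s - t) 0 ∂n ≤ ∫ s, max (s - T') 0 ∂n :=
          integral_mono (integrable_call_integrand hn1 t) (integrable_call_integrand hn1 T')
            fun s => max_le_max (by linarith) le_rfl
        rw [put_eq_call hm, put_eq_call hn1, hmr]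
        linarith [hcall0 t]
    · have hβ : 0 < ∫ x, x ∂μ - ∫ x, x ∂ν := sub_pos.2 hlt
      calc _ = C3 * (∫ x, x ∂μ - ∫ x, x ∂ν) := by rw [hC3]; field_simp
        _ ≤ _ := mul_le_mul_of_nonneg_right (le_max_right _ _) hβ.le

/-! ### Exhaustion and one-sided compensation -/

lemma exists_rat_mem_le {I : Set ℝ} (hI : IsOpen I) {x : ℝ} (hx : x ∈ I) :
    (∃ q : ℚ, (q : ℝ) ∈ I ∧ (q : ℝ) ≤ x) ∧ ∃ q : ℚ, (q : ℝ) ∈ I ∧ x ≤ (q : ℝ) := by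
  obtain ⟨l, u, hxlu, hlu⟩ := mem_nhds_iff_exists_Ioo_subset.1 (hI.mem_nhds hx)
  obtain ⟨q, hq1, hq2⟩ := exists_rat_btwn hxlu.1
  obtain ⟨r, hr1, hr2⟩ := exists_rat_btwn hxlu.2
  exact ⟨⟨q, hlu ⟨hq1, hq2.trans hxlu.2⟩, hq2.le⟩, ⟨r, hlu ⟨hxlu.1.trans hr1, hr2⟩, hr1.le⟩⟩

/-- Exhaustion of an open set `I` of reals by its intersections with intervals `Icc a' b'` whose
endpoints belong to `I`. -/
lemma exists_Icc_measure_ne_zero {I : Set ℝ} (hI : IsOpen I) (ν : Measure ℝ) (S : Set ℝ)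
    (hS : ν S ≠ 0) (a b : ℝ) (ha : a ∈ I) (hb : b ∈ I) :
    ∃ a' ∈ I, ∃ b' ∈ I, a' ≤ a ∧ b ≤ b' ∧ ν ((Icc a' b' ∪ Iᶜ) ∩ S) ≠ 0 := by
  classical
  by_contra! hcon
  have key : ∀ q r : ℚ, ν (if (q : ℝ) ∈ I ∧ (r : ℝ) ∈ I then (Icc (q : ℝ) r ∪ Iᶜ) ∩ S else ∅)
      = 0 := by
    intro q r
    split_ifs with h
    · refine measure_mono_null ?_ (hcon (min q a) ?_ (max r b) ?_ (min_le_right _ _)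
        (le_max_right _ _))
      · exact inter_subset_inter_left _ (union_subset_union_left _
          (Icc_subset_Icc (min_le_left _ _) (le_max_left _ _)))
      · rcases min_choice (q : ℝ) a with h' | h' <;> rw [h']
        exacts [h.1, ha]
      · rcases max_choice (r : ℝ) b with h' | h' <;> rw [h']
        exacts [h.2, hb]
    · exact measure_empty
  refine hS (measure_mono_null (fun y hy => ?_)
    (measure_iUnion_null fun q => measure_iUnion_null fun r => key q r))
  have : ∃ z ∈ I, y ∈ I → z = y := by
    by_cases hyI : y ∈ I
    · exact ⟨y, hyI, fun _ => rfl⟩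
    · exact ⟨a, ha, fun h => absurd h hyI⟩
  obtain ⟨z, hz, hzy⟩ := this
  obtain ⟨⟨q, hq, hqz⟩, ⟨r, hr, hzr⟩⟩ := exists_rat_mem_le hI hz
  refine mem_iUnion.2 ⟨q, mem_iUnion.2 ⟨r, ?_⟩⟩
  rw [if_pos ⟨hq, hr⟩]
  refine ⟨?_, hy⟩
  by_cases hyI : y ∈ I
  · exact Or.inl (hzy hyI ▸ ⟨hqz, hzr⟩)
  · exact Or.inr hyI

/-- A set charged by a measure living on `I × ℝ` is charged within a box on which the first
coordinate stays in a compact subinterval of `I` and the second one is bounded and avoids the rest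
of `I`. -/
lemma exists_box_measure_ne_zero {I : Set ℝ} (hI : IsOpen I) (π : Measure (ℝ × ℝ))
    (hπ : π (Prod.fst ⁻¹' Iᶜ) = 0) (B : Set (ℝ × ℝ)) (hB : π B ≠ 0) :
    ∃ a ∈ I, ∃ b ∈ I, a ≤ b ∧ ∃ N : ℕ,
      π (B ∩ Icc a b ×ˢ ((Icc a b ∪ Iᶜ) ∩ Icc (-(N : ℝ)) N)) ≠ 0 := by
  classical
  by_contra! hcon
  have key : ∀ q r : ℚ, ∀ N : ℕ, π (if (q : ℝ) ∈ I ∧ (r : ℝ) ∈ I then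
      B ∩ Icc (q : ℝ) r ×ˢ ((Icc (q : ℝ) r ∪ Iᶜ) ∩ Icc (-(N : ℝ)) N) else ∅) = 0 := by
    intro q r N
    split_ifs with h
    · rcases le_or_gt (q : ℝ) r with hqr | hqr
      · exact hcon q h.1 r h.2 hqr N
      · rw [Icc_eq_empty (not_le.2 hqr)]; simp
    · exact measure_empty
  refine hB (measure_mono_null (fun p hp => ?_) (measure_union_null hπ
    (measure_iUnion_null fun q => measure_iUnion_null fun r => measure_iUnion_null fun N =>
      key q r N)))
  by_cases hpI : p.1 ∈ I
  swap
  · exact Or.inl hpI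
  right
  have : ∃ z ∈ I, p.2 ∈ I → z = p.2 := by
    by_cases hyI : p.2 ∈ I
    · exact ⟨p.2, hyI, fun _ => rfl⟩
    · exact ⟨p.1, hpI, fun h => absurd h hyI⟩
  obtain ⟨z, hz, hzy⟩ := this
  have hmin : min p.1 z ∈ I := by rcases min_choice p.1 z with h' | h' <;> rwa [h']
  have hmax : max p.1 z ∈ I := by rcases max_choice p.1 z with h' | h' <;> rwa [h']
  obtain ⟨q, hq, hqz⟩ := (exists_rat_mem_le hI hmin).1
  obtain ⟨r, hr, hzr⟩ := (exists_rat_mem_le hI hmax).2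
  obtain ⟨N, hN⟩ := exists_nat_ge |p.2|
  refine mem_iUnion.2 ⟨q, mem_iUnion.2 ⟨r, mem_iUnion.2 ⟨N, ?_⟩⟩⟩
  rw [if_pos ⟨hq, hr⟩]
  refine ⟨hp, ⟨hqz.trans (min_le_left _ _), (le_max_left _ _).trans hzr⟩, ?_, abs_le.1 hN⟩
  by_cases hyI : p.2 ∈ I
  · exact Or.inl (hzy hyI ▸ ⟨hqz.trans (min_le_right _ _), (le_max_right _ _).trans hzr⟩)
  · exact Or.inr hyI

lemma setIntegral_pos_of_pos {ν : Measure ℝ} {Z : Set ℝ} (hZ : MeasurableSet Z) (hνZ : ν Z ≠ 0)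
    {g : ℝ → ℝ} (hg : IntegrableOn g Z ν) (hpos : ∀ z ∈ Z, 0 < g z) : 0 < ∫ z in Z, g z ∂ν := by
  rw [setIntegral_pos_iff_support_of_nonneg_ae
    ((ae_restrict_iff' hZ).2 (Filter.Eventually.of_forall fun z hz => (hpos z hz).le)) hg]
  have h : Z ⊆ Function.support g := fun z hz => (hpos z hz).ne'
  rw [inter_eq_self_of_subset_right h]
  exact pos_iff_ne_zero.2 hνZ

/-- Mass of `m` going up is compensated by mass sent to `Z`, located below the first marginal. -/
lemma exists_compensation_down (m : Measure (ℝ × ℝ)) [IsFiniteMeasure m] (ν : Measure ℝ)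
    (hν : FiniteFirstMoment ν) (Z : Set ℝ) (hZ : MeasurableSet Z) (hνZ : ν Z ≠ 0) (a M : ℝ)
    (hZa : Z ⊆ Iio a) (ha : ∀ᵐ p ∂m, a ≤ p.1) (hM : ∀ᵐ p ∂m, |p.2 - p.1| ≤ M)
    (hm1 : Integrable (fun p : ℝ × ℝ => p.1) m) :
    ∃ κ : Measure (ℝ × ℝ), ∃ C : NNReal, κ.map Prod.fst ≤ C • m.map Prod.fst ∧
      κ.map Prod.snd ≤ C • ν.restrict Z ∧
      ∀ A : Set ℝ, MeasurableSet A → ∫ p in A ×ˢ (univ : Set ℝ), (p.2 - p.1) ∂κ =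
        -∫ p in A ×ˢ (univ : Set ℝ), max (p.2 - p.1) 0 ∂m := by
  have := hν.1
  have hint : ∀ x : ℝ, IntegrableOn (fun z => x - z) Z ν := fun x =>
    ((integrable_const x).sub hν.2).integrableOn
  obtain ⟨κ, C, h1, h2, h3⟩ := exists_compensation m ν hν Z (fun p => max (p.2 - p.1) 0)
    (by fun_prop) M (∫ z in Z, (a - z) ∂ν) 1
    (setIntegral_pos_of_pos hZ hνZ (hint a) fun z hz => sub_pos.2 (hZa hz)) (by norm_num)
    (fun p => le_max_right _ _)
    (hM.mono fun p hp => max_le ((le_abs_self _).trans hp) ((abs_nonneg _).trans hp)) hm1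
    (ha.mono fun p hp => by
      rw [one_mul]
      exact integral_mono (hint a) (hint p.1) fun z => by simp only; linarith)
  exact ⟨κ, C, h1, h2, fun A hA => by rw [h3 A hA, one_mul]⟩

/-- Mass of `m` going down is compensated by mass sent to `Z`, located above the first marginal. -/
lemma exists_compensation_up (m : Measure (ℝ × ℝ)) [IsFiniteMeasure m] (ν : Measure ℝ)
    (hν : FiniteFirstMoment ν) (Z : Set ℝ) (hZ : MeasurableSet Z) (hνZ : ν Z ≠ 0) (b M : ℝ)
    (hZb : Z ⊆ Ioi b) (hb : ∀ᵐ p ∂m, p.1 ≤ b) (hM : ∀ᵐ p ∂m, |p.2 - p.1| ≤ M)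
    (hm1 : Integrable (fun p : ℝ × ℝ => p.1) m) :
    ∃ κ : Measure (ℝ × ℝ), ∃ C : NNReal, κ.map Prod.fst ≤ C • m.map Prod.fst ∧
      κ.map Prod.snd ≤ C • ν.restrict Z ∧
      ∀ A : Set ℝ, MeasurableSet A → ∫ p in A ×ˢ (univ : Set ℝ), (p.2 - p.1) ∂κ =
        ∫ p in A ×ˢ (univ : Set ℝ), max (p.1 - p.2) 0 ∂m := by
  have := hν.1
  have hint : ∀ x : ℝ, IntegrableOn (fun z => z - x) Z ν := fun x =>
    (hν.2.sub (integrable_const x)).integrableOn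
  obtain ⟨κ, C, h1, h2, h3⟩ := exists_compensation m ν hν Z (fun p => max (p.1 - p.2) 0)
    (by fun_prop) M (∫ z in Z, (z - b) ∂ν) (-1)
    (setIntegral_pos_of_pos hZ hνZ (hint b) fun z hz => sub_pos.2 (hZb hz)) (by norm_num)
    (fun p => le_max_right _ _)
    (hM.mono fun p hp => max_le ((by linarith [neg_abs_le (p.2 - p.1)]))
      ((abs_nonneg _).trans hp)) hm1
    (hb.mono fun p hp => by
      rw [neg_one_mul, ← integral_neg]
      simp only [neg_sub]
      exact integral_mono (hint b) (hint p.1) fun z => by simp only; linarith)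
  exact ⟨κ, C, h1, h2, fun A hA => by rw [h3 A hA, neg_one_mul, neg_neg]⟩

lemma measure_Iio_ne_zero_of_put_pos {m : Measure ℝ} {t : ℝ} (h : 0 < put m t) :
    m (Iio t) ≠ 0 := by
  intro h0
  refine h.ne' (integral_eq_zero_of_ae ?_)
  have h1 : ∀ᵐ s ∂m, s ∉ Iio t := measure_eq_zero_iff_ae_notMem.1 h0
  exact h1.mono fun s hs => max_eq_right (by have := not_lt.1 (mt mem_Iio.2 hs); linarith)

lemma measure_Ioi_ne_zero_of_call_pos {m : Measure ℝ} {t : ℝ}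
    (h : 0 < ∫ s, max (s - t) 0 ∂m) : m (Ioi t) ≠ 0 := by
  intro h0
  refine h.ne' (integral_eq_zero_of_ae ?_)
  have h1 : ∀ᵐ s ∂m, s ∉ Ioi t := measure_eq_zero_iff_ae_notMem.1 h0
  exact h1.mono fun s hs => max_eq_right (by have := not_lt.1 (mt mem_Ioi.2 hs); linarith)

/-! ### Charging a given set -/

lemma smul_mono_left {α : Type*} [MeasurableSpace α] (m : Measure α) {c d : NNReal} (h : c ≤ d) :
    c • m ≤ d • m := by gcongr

/-- The drift of a measure `m` carried by a box as in `exists_box_measure_ne_zero` can be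
compensated, using only mass of `ν` on `Icc a' b' ∪ Iᶜ`; the compensation is exact when the
barycentres of `μ` and `ν` agree. -/
lemma exists_compensator (μ ν : Measure ℝ) (hμ : FiniteFirstMoment μ) (hν : FiniteFirstMoment ν)
    (hmass : μ univ = ν univ) (m : Measure (ℝ × ℝ)) [IsFiniteMeasure m] (a b M : ℝ)
    (ha : put μ a < put ν a) (hb : put μ b < put ν b)
    (hab : ∀ᵐ p ∂m, p.1 ∈ Icc a b) (hM : ∀ᵐ p ∂m, |p.2 - p.1| ≤ M)
    (hm1 : Integrable (fun p : ℝ × ℝ => p.1) m) (hm2 : Integrable (fun p : ℝ × ℝ => p.2) m)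
    (hfst : m.map Prod.fst ≤ μ) :
    ∃ a' b' : ℝ, put μ a' < put ν a' ∧ put μ b' < put ν b' ∧ a' ≤ a ∧ b ≤ b' ∧
      ∃ κ : Measure (ℝ × ℝ), ∃ C : NNReal, κ.map Prod.fst ≤ C • μ ∧
        κ.map Prod.snd ≤ C • ν.restrict (Icc a' b' ∪ {t : ℝ | put μ t < put ν t}ᶜ) ∧
        (∀ A : Set ℝ, MeasurableSet A → ∫ p in A ×ˢ (univ : Set ℝ), (p.2 - p.1) ∂κ ≤
          -∫ p in A ×ˢ (univ : Set ℝ), (p.2 - p.1) ∂m) ∧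
        (∫ x, x ∂ν = ∫ x, x ∂μ → ∫ p in univ ×ˢ (univ : Set ℝ), (p.2 - p.1) ∂κ =
          -∫ p in univ ×ˢ (univ : Set ℝ), (p.2 - p.1) ∂m) := by
  set I := {t : ℝ | put μ t < put ν t} with hI
  have hIo : IsOpen I := isOpen_lt (continuous_put hμ) (continuous_put hν)
  have hIm : MeasurableSet Iᶜ := hIo.measurableSet.compl
  have hνa : ν (Iio a) ≠ 0 := measure_Iio_ne_zero_of_put_pos ((put_nonneg μ a).trans_lt ha)
  obtain ⟨a1, ha1, b1, hb1, haa1, hbb1, hZ1⟩ := exists_Icc_measure_ne_zero hIo ν _ hνa a b ha hb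
  obtain ⟨κ1, C1, hk1, hk2, hk3⟩ := exists_compensation_down m ν hν _
    ((measurableSet_Icc.union hIm).inter measurableSet_Iio) hZ1 a M inter_subset_right
    (hab.mono fun p hp => hp.1) hM hm1
  have hd : Integrable (fun p : ℝ × ℝ => p.2 - p.1) m := hm2.sub hm1
  have hd1 : Integrable (fun p : ℝ × ℝ => max (p.2 - p.1) 0) m := hd.pos_part
  have hd2 : Integrable (fun p : ℝ × ℝ => max (p.1 - p.2) 0) m := (hm1.sub hm2).pos_part
  by_cases heq : ∫ x, x ∂ν = ∫ x, x ∂μ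
  swap
  · refine ⟨a1, b1, ha1, hb1, haa1, hbb1, κ1, C1, hk1.trans (by gcongr), hk2.trans ?_,
      fun A hA => ?_, fun h => absurd h heq⟩
    · gcongr; exact inter_subset_left
    · rw [hk3 A hA]
      exact neg_le_neg (integral_mono hd.integrableOn hd1.integrableOn fun p => le_max_left _ _)
  have hmass' : μ.real univ = ν.real univ := by rw [measureReal_def, hmass]; rfl
  have hνb : ν (Ioi b) ≠ 0 := by
    refine measure_Ioi_ne_zero_of_call_pos ?_
    have h1 := hb
    rw [put_eq_call hμ, put_eq_call hν, hmass', heq] at h1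
    have h2 : 0 ≤ ∫ s, max (s - b) 0 ∂μ := integral_nonneg fun _ => le_max_right _ _
    linarith
  obtain ⟨a2, ha2, b2, hb2, haa2, hbb2, hZ2⟩ :=
    exists_Icc_measure_ne_zero hIo ν _ hνb a1 b1 ha1 hb1
  obtain ⟨κ2, C2, hl1, hl2, hl3⟩ := exists_compensation_up m ν hν _
    ((measurableSet_Icc.union hIm).inter measurableSet_Ioi) hZ2 b M inter_subset_right
    (hab.mono fun p hp => hp.2) hM hm1
  have hmf : FiniteFirstMoment (m.map Prod.fst) := hμ.of_le hfst
  have hi : ∀ (κ : Measure (ℝ × ℝ)) (C : NNReal) (Z : Set ℝ), κ.map Prod.fst ≤ C • m.map Prod.fst →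
      κ.map Prod.snd ≤ C • ν.restrict Z → Integrable (fun p : ℝ × ℝ => p.2 - p.1) κ := by
    intro κ C Z h1 h2
    exact (integrable_snd_of_map (((hν.of_le Measure.restrict_le_self).smul C).of_le h2)).sub
      (integrable_fst_of_map ((hmf.smul C).of_le h1))
  have hdrift : ∀ A : Set ℝ, MeasurableSet A → ∫ p in A ×ˢ (univ : Set ℝ), (p.2 - p.1) ∂(κ1 + κ2) =
      -∫ p in A ×ˢ (univ : Set ℝ), (p.2 - p.1) ∂m := by
    intro A hA
    rw [Measure.restrict_add, integral_add_measure (hi κ1 C1 _ hk1 hk2).integrableOn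
      (hi κ2 C2 _ hl1 hl2).integrableOn, hk3 A hA, hl3 A hA, ← integral_neg, ← integral_neg,
      ← integral_add (by exact hd1.neg.integrableOn) hd2.integrableOn]
    refine integral_congr_ae (Filter.Eventually.of_forall fun p => ?_)
    simp only
    rcases le_total p.1 p.2 with h | h
    · rw [max_eq_left (by linarith), max_eq_right (by linarith)]; ring
    · rw [max_eq_right (by linarith), max_eq_left (by linarith)]; ring
  refine ⟨a2, b2, ha2, hb2, haa2.trans haa1, hbb1.trans hbb2, κ1 + κ2, C1 + C2, ?_, ?_,
    fun A hA => (hdrift A hA).le, fun _ => hdrift univ .univ⟩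
  · rw [Measure.map_add _ _ measurable_fst, add_smul]
    exact add_le_add (hk1.trans (by gcongr)) (hl1.trans (by gcongr))
  · rw [Measure.map_add _ _ measurable_snd, add_smul]
    refine add_le_add (hk2.trans ?_) (hl2.trans ?_)
    · gcongr
      exact inter_subset_left.trans (union_subset_union_left _ (Icc_subset_Icc haa2 hbb2))
    · gcongr
      exact inter_subset_left

/-- Every set charged by some coupling of an irreducible pair is charged by a supermartingale
coupling. -/
lemma exists_charging (μ ν : Measure ℝ) (hμ : FiniteFirstMoment μ) (hν : FiniteFirstMoment ν)
    (hmass : μ univ = ν univ) (hput : ∀ t, put μ t ≤ put ν t)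
    (hbary : ∫ x, x ∂ν ≤ ∫ x, x ∂μ) (hconn : OrdConnected {t : ℝ | put μ t < put ν t})
    (hfull : μ {t : ℝ | put μ t < put ν t}ᶜ = 0) (π : Measure (ℝ × ℝ)) (hπ : IsCoupling π μ ν)
    (B : Set (ℝ × ℝ)) (hB : MeasurableSet B) (hπB : π B ≠ 0) :
    ∃ P, IsSupermartingaleCoupling P μ ν ∧ P B ≠ 0 := by
  have hIo : IsOpen {t : ℝ | put μ t < put ν t} :=
    isOpen_lt (continuous_put hμ) (continuous_put hν)
  have hIm : MeasurableSet {t : ℝ | put μ t < put ν t}ᶜ := hIo.measurableSet.compl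
  obtain ⟨a, ha, b, hb, hab, N, hN⟩ := exists_box_measure_ne_zero hIo π
    (by rw [← Measure.map_apply measurable_fst hIm, hπ.1, hfull]) B hπB
  set W := (Icc a b ∪ {t : ℝ | put μ t < put ν t}ᶜ) ∩ Icc (-(N : ℝ)) N with hW
  have hWm : MeasurableSet W := (measurableSet_Icc.union hIm).inter measurableSet_Icc
  have hSm : MeasurableSet (B ∩ Icc a b ×ˢ W) := hB.inter (measurableSet_Icc.prod hWm)
  set m := π.restrict (B ∩ Icc a b ×ˢ W) with hm
  have hmπ : m ≤ π := Measure.restrict_le_self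
  have hfst : m.map Prod.fst ≤ μ := by
    rw [← hπ.1]; exact Measure.map_mono hmπ measurable_fst
  have hsnd : m.map Prod.snd ≤ ν.restrict W := by
    rw [← hπ.2, Measure.restrict_map measurable_snd hWm]
    exact Measure.map_mono (Measure.restrict_mono (fun p hp => hp.2.2) le_rfl) measurable_snd
  have hmf : FiniteFirstMoment (m.map Prod.fst) := hμ.of_le hfst
  have hms : FiniteFirstMoment (m.map Prod.snd) :=
    (hν.of_le Measure.restrict_le_self).of_le hsnd
  have hm1 := integrable_fst_of_map hmf
  have hm2 := integrable_snd_of_map hms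
  have : IsFiniteMeasure m := by
    refine ⟨?_⟩
    have := hmf.1
    have h := measure_lt_top (m.map Prod.fst) univ
    rwa [Measure.map_apply measurable_fst .univ] at h
  have hmS : ∀ᵐ p ∂m, p ∈ B ∩ Icc a b ×ˢ W := ae_restrict_mem hSm
  obtain ⟨a', b', ha', hb', haa', hbb', κ, C, hκ1, hκ2, hκ3, hκ4⟩ :=
    exists_compensator μ ν hμ hν hmass m a b (N + max |a| |b|) ha hb (hmS.mono fun p hp => hp.2.1)
      (hmS.mono fun p hp => by
        have h1 : |p.2| ≤ N := abs_le.2 hp.2.2.2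
        have h2 : |p.1| ≤ max |a| |b| := abs_le_max_abs_abs hp.2.1.1 hp.2.1.2
        exact (abs_sub _ _).trans (add_le_add h1 h2)) hm1 hm2 hfst
  set Z := Icc a' b' ∪ {t : ℝ | put μ t < put ν t}ᶜ with hZ
  have hZm : MeasurableSet Z := measurableSet_Icc.union hIm
  set Q := m + κ with hQ
  have hQ1 : Q.map Prod.fst ≤ (1 + C) • μ := by
    rw [hQ, Measure.map_add _ _ measurable_fst, add_smul, one_smul]
    exact add_le_add hfst hκ1
  have hQ2 : Q.map Prod.snd ≤ (1 + C) • ν.restrict Z := by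
    rw [hQ, Measure.map_add _ _ measurable_snd, add_smul, one_smul]
    refine add_le_add (hsnd.trans (Measure.restrict_mono ?_ le_rfl)) hκ2
    exact inter_subset_left.trans (union_subset_union_left _ (Icc_subset_Icc haa' hbb'))
  have hQ2' : Q.map Prod.snd ≤ (1 + C) • ν :=
    hQ2.trans (by gcongr; exact Measure.restrict_le_self)
  have hQf : FiniteFirstMoment (Q.map Prod.fst) := (hμ.smul _).of_le hQ1
  have hQs : FiniteFirstMoment (Q.map Prod.snd) := (hν.smul _).of_le hQ2'
  have hQi1 := integrable_fst_of_map hQf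
  have hQi2 := integrable_snd_of_map hQs
  have hQd : Integrable (fun p : ℝ × ℝ => p.2 - p.1) Q := hQi2.sub hQi1
  have hQsplit : ∀ A : Set ℝ, ∫ p in A ×ˢ (univ : Set ℝ), p.2 ∂Q
      - ∫ p in A ×ˢ (univ : Set ℝ), p.1 ∂Q = ∫ p in A ×ˢ (univ : Set ℝ), (p.2 - p.1) ∂m
        + ∫ p in A ×ˢ (univ : Set ℝ), (p.2 - p.1) ∂κ := by
    intro A
    rw [← integral_sub hQi2.integrableOn hQi1.integrableOn, hQ, Measure.restrict_add,
      integral_add_measure]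
    · exact (hQd.mono_measure (Measure.le_add_right le_rfl)).integrableOn
    · exact (hQd.mono_measure (Measure.le_add_left le_rfl)).integrableOn
  have hQsup : SupermartingaleProperty Q := fun A hA => by
    have h1 := hQsplit A
    have h2 := hκ3 A hA
    linarith
  have hQb : ∫ x, x ∂(Q.map Prod.snd) - ∫ x, x ∂(Q.map Prod.fst) =
      ∫ p in univ ×ˢ (univ : Set ℝ), p.2 ∂Q - ∫ p in univ ×ˢ (univ : Set ℝ), p.1 ∂Q := by
    rw [integral_map (by fun_prop) (by fun_prop), integral_map (by fun_prop) (by fun_prop),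
      univ_prod_univ, Measure.restrict_univ]
  obtain ⟨D, hD0, hD1, hD2⟩ := exists_gap_domination μ ν (Q.map Prod.fst) (Q.map Prod.snd) hμ hν
    hQf hmass
    (by
      rw [Measure.map_apply measurable_fst .univ, Measure.map_apply measurable_snd .univ]; rfl)
    hbary (by linarith [hQsup univ .univ])
    (fun h => by linarith [hκ4 h, hQsplit univ]) hput hconn hfull a' b'
    (haa'.trans (hab.trans hbb')) ha' hb' Z hZm subset_rfl (1 + C) hQ2
  set c : NNReal := (1 + C + D.toNNReal)⁻¹ with hc
  have hcpos : 0 < c := by rw [hc]; positivity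
  have hcC : c * (1 + C) ≤ 1 := by
    rw [hc, inv_mul_le_iff₀ (by positivity), mul_one]
    exact le_self_add
  have hcD : (c : ℝ) * D ≤ 1 := by
    have h1 : c * D.toNNReal ≤ 1 := by
      rw [hc, inv_mul_le_iff₀ (by positivity), mul_one]
      exact le_add_self
    have h2 : ((c * D.toNNReal : NNReal) : ℝ) ≤ 1 := by exact_mod_cast h1
    rwa [NNReal.coe_mul, Real.coe_toNNReal D hD0] at h2
  have hscale : ∀ (r s : Measure ℝ), r ≤ (1 + C) • s → c • r ≤ s := fun r s h =>
    calc c • r ≤ c • ((1 + C) • s) := by gcongr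
      _ = (c * (1 + C)) • s := smul_smul _ _ _
      _ ≤ (1 : NNReal) • s := smul_mono_left s hcC
      _ = s := one_smul _ _
  have hmul : ∀ x y : ℝ, x ≤ D * y → 0 ≤ y → c * x ≤ y := fun x y hx hy =>
    calc (c : ℝ) * x ≤ c * (D * y) := mul_le_mul_of_nonneg_left hx c.coe_nonneg
      _ = c * D * y := by ring
      _ ≤ 1 * y := mul_le_mul_of_nonneg_right hcD hy
      _ = y := one_mul y
  obtain ⟨P, hP, hQP⟩ := exists_supermartingaleCoupling_ge μ ν _ _ hμ hν hmass Q
    ⟨⟨rfl, rfl⟩, hQsup⟩ c (hscale _ _ hQ1) (hscale _ _ hQ2')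
    (fun t => hmul _ _ (hD1 t) (sub_nonneg.2 (hput t))) (hmul _ _ hD2 (sub_nonneg.2 hbary))
  refine ⟨P, hP, fun hPB => ?_⟩
  have h1 : (c • Q) B = 0 := le_antisymm ((hQP B).trans hPB.le) zero_le
  rw [Measure.smul_apply, ENNReal.smul_def, smul_eq_mul, mul_eq_zero] at h1
  rcases h1 with h1 | h1
  · exact hcpos.ne' (by exact_mod_cast h1)
  · refine hN ?_
    have h2 : m B ≤ Q B := by
      rw [hQ, Measure.add_apply]; exact le_self_add
    rw [h1, hm, Measure.restrict_apply hB] at h2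
    refine measure_mono_null (fun p hp => ?_) (le_antisymm h2 zero_le)
    exact ⟨hp.1, hp⟩

/-- Lemma 3.9. If `μ ≤_cd ν` is irreducible, the `S(μ,ν)`-polar sets
and the `Π(μ,ν)`-polar sets coincide. -/
theorem polar_sets_irreducible
    (μ ν : Measure ℝ) (hμ : FiniteFirstMoment μ) (hν : FiniteFirstMoment ν)
    (h : CDOrder μ ν)
    (hne : {t : ℝ | put μ t < put ν t}.Nonempty)
    (hconn : IsPreconnected {t : ℝ | put μ t < put ν t})
    (hfull : μ {t : ℝ | put μ t < put ν t} = μ Set.univ) :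
    ∀ B : Set (ℝ × ℝ), MeasurableSet B →
      ((∀ P : Measure (ℝ × ℝ), IsSupermartingaleCoupling P μ ν → P B = 0) ↔
        (∀ π : Measure (ℝ × ℝ), IsCoupling π μ ν → π B = 0)) := by
  intro B hB
  refine ⟨fun hS π hπ => ?_, fun hC P hP => hC P hP.1⟩
  have := hμ.1
  have := hν.1
  have hmass : μ univ = ν univ := by
    have h1 := h (fun _ => 1) (convexOn_const 1 convex_univ) antitone_const
      ⟨1, fun x => by rw [abs_one]; linarith [abs_nonneg x]⟩
    have h2 := h (fun _ => -1) (convexOn_const (-1) convex_univ) antitone_const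
      ⟨1, fun x => by rw [abs_neg, abs_one]; linarith [abs_nonneg x]⟩
    simp only [integral_const, smul_eq_mul, mul_one, mul_neg] at h1 h2
    have h3 : μ.real univ = ν.real univ := by linarith
    exact (ENNReal.toReal_eq_toReal_iff' (measure_ne_top _ _) (measure_ne_top _ _)).1 h3
  have hbary : ∫ x, x ∂ν ≤ ∫ x, x ∂μ := by
    have h1 := h (fun x => -x) (concaveOn_id convex_univ).neg (fun x y hxy => neg_le_neg hxy)
      ⟨1, fun x => by rw [abs_neg]; linarith⟩
    rw [integral_neg, integral_neg] at h1
    linarith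
  have hput : ∀ t, put μ t ≤ put ν t := by
    intro t
    refine h (fun x => max (t - x) 0) ?_ (fun x y hxy => max_le_max (by linarith) le_rfl)
      ⟨1 + |t|, fun x => ?_⟩
    · have h1 : ConvexOn ℝ univ fun x : ℝ => t - x :=
        (convexOn_const t convex_univ).sub (concaveOn_id convex_univ)
      exact h1.sup (convexOn_const 0 convex_univ)
    · rw [abs_of_nonneg (le_max_right _ _)]
      refine max_le ?_ (by positivity)
      nlinarith [le_abs_self t, neg_abs_le x, abs_nonneg t, abs_nonneg x,
        mul_nonneg (abs_nonneg t) (abs_nonneg x)]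
  have hIm : MeasurableSet {t : ℝ | put μ t < put ν t} :=
    (isOpen_lt (continuous_put hμ) (continuous_put hν)).measurableSet
  have hnull : μ {t : ℝ | put μ t < put ν t}ᶜ = 0 := by
    rw [measure_compl hIm (measure_ne_top _ _), hfull, tsub_self]
  by_contra hπB
  obtain ⟨P, hP, hPB⟩ := exists_charging μ ν hμ hν hmass hput hbary hconn.ordConnected hnull π hπ
    B hB hπB
  exact hPB (hS P hP)
end
end
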